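/- arXiv:1207.1140 — 4 statements merged into one kernel-verified Lean document; each statement's English description precedes it below -/
import Mathlib

section
/- Let q be a prime power. There exist a constant a_q > 0 depending only on q and an absolute constant C > 0 such that for every ε ∈ (0, 1/2) and all sufficiently large integers n the following holds: the random linear code C ⊆ F_q^n of dimension k̃ = ⌈a_q · ε² · n / log³(1/ε)⌉ and block length n is (1 − 1/q − ε, C/ε²)-list decodable with probability at least 0.99. -/
open scoped BigOperators

/-- Relative Hamming distance between two strings of length `n`. -/
noncomputable def relDist {n : ℕ} {A : Type*} (x y : Fin n → A) : ℝ :=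
  ({i : Fin n | x i ≠ y i}.ncard : ℝ) / (n : ℝ)

/-- A code `C ⊆ A^n` is `(ρ, L)`-list decodable if every Hamming ball of relative
radius (strictly) `ρ` contains at most `L` codewords. -/
def listDecodable {n : ℕ} {A : Type*} (C : Set (Fin n → A)) (ρ L : ℝ) : Prop :=
  ∀ y : Fin n → A, ({c | c ∈ C ∧ relDist c y < ρ}.ncard : ℝ) ≤ L
open Classical in
/-- number of indices with colour `α` -/
noncomputable def cnt {I K : Type*} [Fintype I] (p : I → K) (α : K) : ℝ :=
  ∑ i, if p i = α then (1 : ℝ) else 0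

/-- plurality -/
noncomputable def plu {I K : Type*} [Fintype I] [Fintype K] [Nonempty K] (p : I → K) : ℝ :=
  Finset.univ.sup' Finset.univ_nonempty (cnt p)

section basic
variable {I J K X : Type*} [Fintype I] [Fintype J] [Fintype K] [Nonempty K] [Fintype X]
  [DecidableEq I] [DecidableEq J]

lemma cnt_le_plu (p : I → K) (α : K) : cnt p α ≤ plu p :=
  Finset.le_sup' (cnt p) (Finset.mem_univ α)

lemma plu_exists (p : I → K) : ∃ α, plu p = cnt p α := by
  obtain ⟨α, _, h⟩ := Finset.exists_mem_eq_sup' Finset.univ_nonempty (cnt p)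
  exact ⟨α, h⟩

lemma cnt_sum (p p' : I → K) (α : K) : cnt (Sum.elim p p') α = cnt p α + cnt p' α := by
  unfold cnt
  rw [Fintype.sum_sum_type]; rfl

lemma cnt_equiv (e : I ≃ J) (p : J → K) (α : K) : cnt (p ∘ e) α = cnt p α := by
  classical
  exact Equiv.sum_comp e (fun j => if p j = α then (1 : ℝ) else 0)

lemma plu_equiv (e : I ≃ J) (p : J → K) : plu (p ∘ e) = plu p := by
  have : cnt (p ∘ e) = cnt p := funext (cnt_equiv e p)
  simp only [plu, this]

noncomputable def hh (p p' : I → K) : ℝ :=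
  plu (Sum.elim p p') / (2 * Fintype.card I) - plu p / Fintype.card I

lemma hh_abs (hI : 0 < (Fintype.card I : ℝ)) (p p' : I → K) :
    ∃ α, |hh p p'| ≤ |cnt p α - cnt p' α| / (2 * Fintype.card I) := by
  set m : ℝ := (Fintype.card I : ℝ) with hm
  obtain ⟨α, hα⟩ := plu_exists (Sum.elim p p')
  obtain ⟨β, hβ⟩ := plu_exists p
  have e1 := cnt_le_plu p α
  have e2 := cnt_le_plu (Sum.elim p p') β
  rw [cnt_sum] at hα e2
  have key : hh p p' = (plu (Sum.elim p p') - 2 * plu p) / (2 * m) := by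
    unfold hh; rw [← hm]; field_simp
  rcases le_total 0 (hh p p') with h | h
  · refine ⟨α, ?_⟩
    rw [abs_of_nonneg h, key]
    gcongr
    have := neg_abs_le (cnt p α - cnt p' α)
    linarith
  · refine ⟨β, ?_⟩
    rw [abs_of_nonpos h, key, ← neg_div]
    gcongr
    have := le_abs_self (cnt p β - cnt p' β)
    linarith

lemma mgf (c : X → K) (α : K) (θ : ℝ) :
    ∑ w : I → X × X, Real.exp (θ * (cnt (fun i => c (w i).1) α - cnt (fun i => c (w i).2) α))
      ≤ (Fintype.card (I → X × X) : ℝ) * Real.exp (θ ^ 2 * Fintype.card I / 2) := by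
  classical
  let d : X → ℝ := fun x => if c x = α then 1 else 0
  have h1 : ∀ w : I → X × X,
      Real.exp (θ * (cnt (fun i => c (w i).1) α - cnt (fun i => c (w i).2) α))
        = ∏ i, Real.exp (θ * (d (w i).1 - d (w i).2)) := by
    intro w
    rw [← Real.exp_sum, ← Finset.mul_sum, Finset.sum_sub_distrib]
    simp only [cnt, d]
  simp_rw [h1]
  have h2 : ∑ w : I → X × X, ∏ i, Real.exp (θ * (d (w i).1 - d (w i).2))
      = (∑ z : X × X, Real.exp (θ * (d z.1 - d z.2))) ^ Fintype.card I := by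
    have := (Finset.prod_univ_sum (fun _ : I => (Finset.univ : Finset (X × X)))
      (fun _ z => Real.exp (θ * (d z.1 - d z.2)))).symm
    rw [Fintype.piFinset_univ] at this
    rw [this]; simp
  rw [h2]
  have h3 : ∑ z : X × X, Real.exp (θ * (d z.1 - d z.2)) ≤
      (Fintype.card (X × X) : ℝ) * Real.exp (θ ^ 2 / 2) := by
    have s1 : ∑ z : X × X, Real.exp (θ * (d z.1 - d z.2))
        = ∑ z : X × X, Real.exp (- (θ * (d z.1 - d z.2))) := by
      rw [← Equiv.sum_comp (Equiv.prodComm X X)]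
      refine Finset.sum_congr rfl fun z _ => ?_
      simp only [Equiv.prodComm_apply, Prod.fst_swap, Prod.snd_swap]
      congr 1; ring
    have s2 : ∑ z : X × X, Real.exp (θ * (d z.1 - d z.2))
        = ∑ z : X × X, Real.cosh (θ * (d z.1 - d z.2)) := by
      simp_rw [Real.cosh_eq]
      rw [← Finset.sum_div, Finset.sum_add_distrib, ← s1]; ring
    rw [s2]
    calc _ ≤ ∑ z : X × X, Real.exp (θ ^ 2 / 2) := by
          refine Finset.sum_le_sum fun z _ => (Real.cosh_le_exp_half_sq _).trans ?_
          apply Real.exp_le_exp.2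
          have : (d z.1 - d z.2) ^ 2 ≤ 1 := by
            simp only [d]; split_ifs <;> norm_num
          rw [mul_pow]; nlinarith [sq_nonneg θ]
      _ = _ := by simp
  calc _ ≤ ((Fintype.card (X × X) : ℝ) * Real.exp (θ ^ 2 / 2)) ^ Fintype.card I :=
        pow_le_pow_left₀ (Finset.sum_nonneg fun _ _ => (Real.exp_pos _).le) h3 _
    _ = _ := by
        rw [mul_pow, ← Real.exp_nat_mul, Fintype.card_fun]
        push_cast
        congr 2; ring

lemma exp_second (x : ℝ) : Real.exp x - 1 - x ≤ x ^ 2 * Real.exp |x| := by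
  have a1 := Real.add_one_le_exp x
  have a2 : Real.exp x - 1 ≤ x * Real.exp x := by
    have := Real.add_one_le_exp (-x)
    have h := mul_le_mul_of_nonneg_right this (Real.exp_pos x).le
    rw [← Real.exp_add] at h; simp at h; linarith
  rcases le_total 0 x with h | h
  · rw [abs_of_nonneg h]; nlinarith
  · have : 1 ≤ Real.exp |x| := Real.one_le_exp (abs_nonneg x)
    nlinarith [sq_nonneg x]

lemma exp_second' (h s β : ℝ) (hs : 0 ≤ s) (hβ : 0 ≤ β) (hβ1 : β ≤ 1) :
    Real.exp (β * s * h) - 1 - β * s * h ≤ 2 * β ^ 2 * Real.exp (2 * s * |h|) := by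
  refine (exp_second _).trans ?_
  have hw : 0 ≤ s * |h| := by positivity
  have e1 : |β * s * h| = β * (s * |h|) := by
    rw [abs_mul, abs_mul, abs_of_nonneg hs, abs_of_nonneg hβ]; ring
  have e2 : (β * s * h) ^ 2 = β ^ 2 * (s * |h|) ^ 2 := by
    rw [mul_pow s, sq_abs]; ring
  rw [e1, e2]
  have e3 : Real.exp (2 * s * |h|) = Real.exp (s * |h|) * Real.exp (s * |h|) := by
    rw [← Real.exp_add]; congr 1; ring
  have e4 : (s * |h|) ^ 2 ≤ 2 * Real.exp (s * |h|) := by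
    have := Real.quadratic_le_exp_of_nonneg hw; nlinarith
  have e5 : Real.exp (β * (s * |h|)) ≤ Real.exp (s * |h|) := by
    apply Real.exp_le_exp.2; nlinarith
  rw [e3]
  calc _ ≤ β ^ 2 * (2 * Real.exp (s * |h|)) * Real.exp (s * |h|) := by gcongr
    _ = _ := by ring

lemma second_order (hI : 0 < (Fintype.card I : ℝ)) (c : X → K) (β : ℝ) (hβ : 0 ≤ β) (hβ1 : β ≤ 1) :
    ∑ w : I → X × X,
      (Real.exp (β * √(Fintype.card I) * hh (fun i => c (w i).1) (fun i => c (w i).2)) - 1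
        - β * √(Fintype.card I) * hh (fun i => c (w i).1) (fun i => c (w i).2))
      ≤ (Fintype.card (I → X × X) : ℝ) * (7 * Fintype.card K * β ^ 2) := by
  set m : ℝ := (Fintype.card I : ℝ) with hm
  have hs : 0 < √m := Real.sqrt_pos.2 hI
  have hsm : √m * √m = m := Real.mul_self_sqrt hI.le
  let D : (I → X × X) → K → ℝ := fun w α =>
    cnt (fun i => c (w i).1) α - cnt (fun i => c (w i).2) α
  have p1 : ∀ w : I → X × X,
      (Real.exp (β * √m * hh (fun i => c (w i).1) (fun i => c (w i).2)) - 1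
        - β * √m * hh (fun i => c (w i).1) (fun i => c (w i).2))
      ≤ 2 * β ^ 2 * ∑ α, (Real.exp ((1 / √m) * D w α) + Real.exp ((-(1 / √m)) * D w α)) := by
    intro w
    refine (exp_second' _ _ _ hs.le hβ hβ1).trans ?_
    gcongr
    obtain ⟨α, hα⟩ := hh_abs hI (fun i => c (w i).1) (fun i => c (w i).2)
    rw [← hm] at hα
    have e : 2 * √m * |hh (fun i => c (w i).1) (fun i => c (w i).2)| ≤ |(1 / √m) * D w α| := by
      rw [abs_mul, abs_of_pos (by positivity : 0 < 1 / √m)]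
      calc _ ≤ 2 * √m * (|D w α| / (2 * m)) := by gcongr
        _ = _ := by
          field_simp
          rw [Real.sq_sqrt hI.le]; ring
    calc _ ≤ Real.exp |(1 / √m) * D w α| := Real.exp_le_exp.2 e
      _ ≤ Real.exp ((1 / √m) * D w α) + Real.exp ((-(1 / √m)) * D w α) := by
          rw [neg_mul]; exact Real.exp_abs_le _
      _ ≤ _ := Finset.single_le_sum
          (f := fun α => Real.exp ((1 / √m) * D w α) + Real.exp ((-(1 / √m)) * D w α))
          (fun _ _ => by positivity) (Finset.mem_univ α)
  refine (Finset.sum_le_sum fun w _ => p1 w).trans ?_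
  rw [← Finset.mul_sum, Finset.sum_comm]
  have sq1 : (1 / √m) ^ 2 * m / 2 = 1 / 2 := by
    rw [div_pow, Real.sq_sqrt hI.le]; field_simp
  have sq2 : (-(1 / √m)) ^ 2 * m / 2 = 1 / 2 := by rw [neg_sq]; exact sq1
  have p2 : ∀ α : K, ∑ w : I → X × X,
      (Real.exp ((1 / √m) * D w α) + Real.exp ((-(1 / √m)) * D w α))
      ≤ (Fintype.card (I → X × X) : ℝ) * (7 / 2) := by
    intro α
    rw [Finset.sum_add_distrib]
    have g1 := mgf (I := I) c α (1 / √m)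
    have g2 := mgf (I := I) c α (-(1 / √m))
    rw [← hm, sq1] at g1
    rw [← hm, sq2] at g2
    have g3 : Real.exp (1 / 2) ≤ 7 / 4 := by
      have := Real.exp_one_lt_d9
      have h2 : Real.exp (1 / 2) * Real.exp (1 / 2) = Real.exp 1 := by
        rw [← Real.exp_add]; norm_num
      nlinarith [Real.exp_pos (1 / 2 : ℝ)]
    have g4 : (Fintype.card (I → X × X) : ℝ) * Real.exp (1 / 2)
      ≤ (Fintype.card (I → X × X) : ℝ) * (7 / 4) := by gcongr
    simp only [D]
    linarith
  calc _ ≤ 2 * β ^ 2 * ∑ α : K, (Fintype.card (I → X × X) : ℝ) * (7 / 2) := by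
        gcongr with α _; exact p2 α
    _ = _ := by simp; ring

/-- averaged normalised plurality -/
noncomputable def psi (I : Type*) [Fintype I] [DecidableEq I] (c : X → K) : ℝ :=
  (∑ u : I → X, plu (fun i => c (u i))) / (Fintype.card (I → X) * Fintype.card I)

lemma psi_equiv (e : I ≃ J) (c : X → K) : psi I c = psi J c := by
  classical
  unfold psi
  rw [Fintype.card_congr e, Fintype.card_congr (Equiv.arrowCongr e (Equiv.refl X))]
  congr 1
  · rw [← Equiv.sum_comp (Equiv.arrowCongr e (Equiv.refl X)).symm]
    refine Finset.sum_congr (by ext; simp) fun u _ => ?_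
    rw [← plu_equiv e]; rfl

lemma psi_step [Nonempty X] [Nonempty I] (c : X → K) :
    (∑ w : I → X × X, hh (fun i => c (w i).1) (fun i => c (w i).2)) =
      Fintype.card (I → X × X) * (psi (I ⊕ I) c - psi I c) := by
  classical
  have hX : (0 : ℝ) < Fintype.card X := by exact_mod_cast Fintype.card_pos
  have hI : (0 : ℝ) < Fintype.card I := by exact_mod_cast Fintype.card_pos
  let e1 : (I → X × X) ≃ (I → X) × (I → X) := Equiv.arrowProdEquivProdArrow _ _ _
  let e2 : (I ⊕ I → X) ≃ (I → X) × (I → X) := Equiv.sumArrowEquivProdArrow _ _ _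
  have t1 : ∑ w : I → X × X, plu (Sum.elim (fun i => c (w i).1) (fun i => c (w i).2))
      = ∑ u : I ⊕ I → X, plu (fun i => c (u i)) := by
    rw [← Equiv.sum_comp (e1.trans e2.symm)]
    refine Finset.sum_congr rfl fun w _ => ?_
    congr 1
    ext i; cases i <;> rfl
  have t2 : ∑ w : I → X × X, plu (fun i => c (w i).1)
      = Fintype.card (I → X) * ∑ u : I → X, plu (fun i => c (u i)) := by
    rw [← Equiv.sum_comp e1.symm, Fintype.sum_prod_type, Finset.mul_sum]
    refine Finset.sum_congr rfl fun u _ => ?_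
    have : ∀ y : I → X, (plu fun i => c (e1.symm (u, y) i).1) = plu (fun i => c (u i)) :=
      fun y => rfl
    simp [this]
  simp only [hh, Finset.sum_sub_distrib, ← Finset.sum_div, t1, t2, psi]
  simp only [Fintype.card_fun, Fintype.card_sum, Fintype.card_prod]
  push_cast
  rw [mul_pow, pow_add]
  field_simp
  ring
end basic

section chern
variable {I K V W X : Type*} [Fintype I] [Fintype K] [Nonempty K] [Fintype X]
  [DecidableEq I] [Fintype V] [Fintype W] [Nonempty V]

open Classical in
lemma chernoff (n : ℕ) (H : W → V → ℝ) (t : ℝ) :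
    ((Finset.univ.filter fun g : Fin n → V => ∃ w,
      n * ((∑ v, Real.exp (H w v)) / Fintype.card V - 1) + t < ∑ j, H w (g j)).card : ℝ)
      ≤ Fintype.card W * ((Fintype.card V : ℝ) ^ n * Real.exp (-t)) := by
  have hV : (0 : ℝ) < Fintype.card V := by exact_mod_cast Fintype.card_pos
  let M : W → ℝ := fun w => (∑ v, Real.exp (H w v)) / Fintype.card V
  have hM : ∀ w, 0 ≤ M w := fun w => by
    simp only [M]; positivity
  have h1 : ((Finset.univ.filter fun g : Fin n → V => ∃ w,
      n * (M w - 1) + t < ∑ j, H w (g j)).card : ℝ)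
      ≤ ∑ g : Fin n → V, ∑ w, Real.exp (∑ j, H w (g j) - (n * (M w - 1) + t)) := by
    rw [Finset.card_filter]
    push_cast
    refine Finset.sum_le_sum fun g _ => ?_
    split_ifs with h
    · obtain ⟨w, hw⟩ := h
      calc (1 : ℝ) ≤ Real.exp (∑ j, H w (g j) - (n * (M w - 1) + t)) :=
            Real.one_le_exp (by linarith)
        _ ≤ _ := Finset.single_le_sum
            (f := fun w => Real.exp (∑ j, H w (g j) - (n * (M w - 1) + t)))
            (fun _ _ => (Real.exp_pos _).le) (Finset.mem_univ w)
    · exact Finset.sum_nonneg fun _ _ => (Real.exp_pos _).le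
  refine h1.trans ?_
  rw [Finset.sum_comm]
  have h2 : ∀ w, ∑ g : Fin n → V, Real.exp (∑ j, H w (g j) - (n * (M w - 1) + t))
      ≤ (Fintype.card V : ℝ) ^ n * Real.exp (-t) := by
    intro w
    have e1 : ∀ g : Fin n → V, Real.exp (∑ j, H w (g j) - (n * (M w - 1) + t))
        = (∏ j, Real.exp (H w (g j))) * (Real.exp (-(n * (M w - 1))) * Real.exp (-t)) := by
      intro g
      rw [← Real.exp_sum, ← Real.exp_add, ← Real.exp_add]; congr 1; ring
    simp_rw [e1]
    rw [← Finset.sum_mul]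
    have e2 : ∑ g : Fin n → V, ∏ j, Real.exp (H w (g j)) = (Fintype.card V * M w) ^ n := by
      have := (Finset.prod_univ_sum (fun _ : Fin n => (Finset.univ : Finset V))
        (fun _ v => Real.exp (H w v))).symm
      rw [Fintype.piFinset_univ] at this
      rw [this]
      simp only [M, Finset.prod_const, Finset.card_univ, Fintype.card_fin]
      congr 1; field_simp
    rw [e2, mul_pow, mul_assoc]
    have e3 : M w ^ n ≤ Real.exp (n * (M w - 1)) := by
      rw [Real.exp_nat_mul]
      have := Real.add_one_le_exp (M w - 1)
      exact pow_le_pow_left₀ (hM w) (by linarith) n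
    have e4 : M w ^ n * Real.exp (-(n * (M w - 1))) ≤ 1 := by
      rw [Real.exp_neg, ← div_eq_mul_inv]
      exact div_le_one_of_le₀ e3 (Real.exp_pos _).le
    rw [← mul_assoc (M w ^ n)]
    calc _ ≤ (Fintype.card V : ℝ) ^ n * (1 * Real.exp (-t)) := by gcongr
      _ = _ := by rw [one_mul]
  calc _ ≤ ∑ w : W, (Fintype.card V : ℝ) ^ n * Real.exp (-t) :=
        Finset.sum_le_sum fun w _ => h2 w
    _ = _ := by simp

/-- exponent at a level -/
noncomputable def lev (I : Type*) [Fintype I] (col : V → V → K) (lam : ℝ) (w : I → V × V)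
    (v : V) : ℝ :=
  lam * hh (fun i => col (w i).1 v) (fun i => col (w i).2 v)

def goodAt (I : Type*) [Fintype I] (col : V → V → K) (n : ℕ) (lam t : ℝ) (g : Fin n → V) : Prop :=
  ∀ w : I → V × V, ∑ j, lev I col lam w (g j) ≤
    n * ((∑ v, Real.exp (lev I col lam w v)) / Fintype.card V - 1) + t

lemma level [Nonempty X] [Nonempty I] (col : V → V → K) (n : ℕ) (β t : ℝ) (hβ : 0 ≤ β)
    (hβ1 : β ≤ 1) (g : Fin n → V) (φ : X → V)
    (hg : goodAt I col n (β * √(Fintype.card I)) t g) :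
    (β * √(Fintype.card I)) * ∑ j, (psi (I ⊕ I) (fun x => col (φ x) (g j))
        - psi I (fun x => col (φ x) (g j)))
      ≤ n * ((β * √(Fintype.card I)) * ((∑ v, (psi (I ⊕ I) (fun x => col (φ x) v)
        - psi I (fun x => col (φ x) v))) / Fintype.card V) + 7 * Fintype.card K * β ^ 2) + t := by
  have hV : (0 : ℝ) < Fintype.card V := by exact_mod_cast Fintype.card_pos
  have hI : (0 : ℝ) < Fintype.card I := by exact_mod_cast Fintype.card_pos
  have hW : (0 : ℝ) < Fintype.card (I → X × X) := by exact_mod_cast Fintype.card_pos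
  set lam := β * √(Fintype.card I : ℝ) with hlam
  set N : ℝ := (Fintype.card (I → X × X) : ℝ) with hN
  let hw : (I → X × X) → V → ℝ := fun w v =>
    hh (fun i => col (φ (w i).1) v) (fun i => col (φ (w i).2) v)
  have st : ∀ v, ∑ w, hw w v = N * (psi (I ⊕ I) (fun x => col (φ x) v)
        - psi I (fun x => col (φ x) v)) := fun v => psi_step (I := I) (fun x => col (φ x) v)
  have so : ∀ v, ∑ w, (Real.exp (lam * hw w v) - 1 - lam * hw w v)
      ≤ N * (7 * Fintype.card K * β ^ 2) := fun v =>
    second_order hI (fun x => col (φ x) v) β hβ hβ1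
  have gw : ∀ w : I → X × X, ∑ j, lam * hw w (g j) ≤
      n * ((∑ v, (Real.exp (lam * hw w v) - 1)) / Fintype.card V) + t := by
    intro w
    have := hg (fun i => (φ (w i).1, φ (w i).2))
    simp only [lev] at this
    refine this.trans (le_of_eq ?_)
    rw [Finset.sum_sub_distrib]
    simp only [Finset.sum_const, Finset.card_univ, nsmul_eq_mul, mul_one]
    rw [sub_div, div_self hV.ne']
  have big := Finset.sum_le_sum fun w (_ : w ∈ (Finset.univ : Finset (I → X × X))) => gw w
  rw [Finset.sum_comm] at big
  simp only [← Finset.mul_sum, st, Finset.sum_add_distrib, Finset.sum_const, Finset.card_univ,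
    nsmul_eq_mul, ← Finset.sum_div] at big
  rw [Finset.sum_comm] at big
  have so2 : ∑ v, ∑ w, (Real.exp (lam * hw w v) - 1) ≤
      ∑ v : V, N * (lam * (psi (I ⊕ I) (fun x => col (φ x) v)
        - psi I (fun x => col (φ x) v)) + 7 * Fintype.card K * β ^ 2) := by
    refine Finset.sum_le_sum fun v _ => ?_
    have := so v
    rw [Finset.sum_sub_distrib, ← Finset.mul_sum, st] at this
    linarith
  rw [← Finset.mul_sum, Finset.sum_add_distrib, ← Finset.mul_sum] at so2
  simp only [Finset.sum_const, Finset.card_univ, nsmul_eq_mul] at so2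
  have fin := big.trans (add_le_add_left (mul_le_mul_of_nonneg_left
    (div_le_div_of_nonneg_right so2 hV.le) (Nat.cast_nonneg n)) _)
  refine le_of_mul_le_mul_left ?_ hW
  refine le_trans (le_of_eq ?_) (fin.trans (le_of_eq ?_))
  · ring
  · rw [← hN]; field_simp
end chern

section top
variable {I X F : Type*} [Fintype I] [Fintype X] [DecidableEq I]

open Classical in
lemma count_update (i : I) (P : (I → X) → Prop)
    (hP : ∀ u a b, P (Function.update u i a) → P (Function.update u i b) → a = b) :
    (Fintype.card X : ℝ) * ∑ u : I → X, (if P u then (1 : ℝ) else 0) ≤ Fintype.card (I → X) := by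
  have h1 : ∑ z : (I → X) × X, (if P (Function.update z.1 i z.2) then (1 : ℝ) else 0)
      = ∑ z : (I → X) × X, (if P z.1 then (1 : ℝ) else 0) := by
    let e : (I → X) × X ≃ (I → X) × X :=
      { toFun := fun z => (Function.update z.1 i z.2, z.1 i)
        invFun := fun z => (Function.update z.1 i z.2, z.1 i)
        left_inv := fun z => by simp
        right_inv := fun z => by simp }
    exact Equiv.sum_comp e (fun z => if P z.1 then (1 : ℝ) else 0)
  have h2 : ∑ z : (I → X) × X, (if P z.1 then (1 : ℝ) else 0)
      = (Fintype.card X : ℝ) * ∑ u : I → X, (if P u then (1 : ℝ) else 0) := by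
    rw [Fintype.sum_prod_type, Finset.mul_sum]
    refine Finset.sum_congr rfl fun u _ => ?_
    by_cases hPu : P u <;> simp [hPu]
  rw [← h2, ← h1, Fintype.sum_prod_type]
  calc _ ≤ ∑ u : I → X, (1 : ℝ) := by
        refine Finset.sum_le_sum fun u _ => ?_
        rw [Finset.sum_boole]
        norm_cast
        rw [Finset.card_le_one]
        intro a ha b hb
        simp only [Finset.mem_filter, Finset.mem_univ, true_and] at ha hb
        exact hP u a b ha hb
    _ = _ := by simp

open Classical in
lemma hyper [Field F] [Fintype F] (d : I → F) (hd : d ≠ 0) :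
    (Fintype.card F : ℝ) * ∑ v : I → F, (if d ⬝ᵥ v = 0 then (1 : ℝ) else 0)
      ≤ Fintype.card (I → F) := by
  obtain ⟨i, hi⟩ := Function.ne_iff.1 hd
  apply count_update i
  intro u a b ha hb
  have key : ∀ a, d ⬝ᵥ Function.update u i a = d i * a + d ⬝ᵥ Function.update u i 0 := by
    intro a
    have : Function.update u i a = Pi.single i a + Function.update u i 0 := by
      ext j
      by_cases h : j = i
      · subst h; simp
      · simp [h]
    rw [this, dotProduct_add, dotProduct_single]
  rw [key] at ha hb
  have : d i * a = d i * b := by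
    rw [eq_neg_of_add_eq_zero_left ha, eq_neg_of_add_eq_zero_left hb]
  exact mul_left_cancel₀ hi this

lemma plu_l2 {K : Type*} [Fintype K] [Nonempty K] [Nonempty I] (p : I → K) (η : ℝ) (hη : 0 < η) :
    open Classical in
    plu p / Fintype.card I ≤ 1 / Fintype.card K + η / 2 + (1 / (2 * η)) *
      ((∑ i, ∑ i', if p i = p i' then (1 : ℝ) else 0) / (Fintype.card I : ℝ) ^ 2
        - 1 / Fintype.card K) := by
  classical
  have hI : (0 : ℝ) < Fintype.card I := by exact_mod_cast Fintype.card_pos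
  have hK : (0 : ℝ) < Fintype.card K := by exact_mod_cast Fintype.card_pos
  set m : ℝ := (Fintype.card I : ℝ) with hm
  set q : ℝ := (Fintype.card K : ℝ) with hq
  obtain ⟨α, hα⟩ := plu_exists p
  have s1 : ∑ α, cnt p α = m := by
    unfold cnt; rw [Finset.sum_comm]; simp [hm]
  have s2 : ∑ α, (cnt p α) ^ 2 = ∑ i, ∑ i', if p i = p i' then (1 : ℝ) else 0 := by
    unfold cnt
    simp_rw [sq, Finset.sum_mul_sum]
    rw [Finset.sum_comm]
    refine Finset.sum_congr rfl fun i _ => ?_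
    rw [Finset.sum_comm]
    refine Finset.sum_congr rfl fun i' _ => ?_
    simp [eq_comm]
  have s3 : ∑ α, (cnt p α / m - 1 / q) ^ 2 =
      (∑ i, ∑ i', if p i = p i' then (1 : ℝ) else 0) / m ^ 2 - 1 / q := by
    have : ∀ α, (cnt p α / m - 1 / q) ^ 2
        = (cnt p α) ^ 2 / m ^ 2 - (2 / (m * q)) * cnt p α + 1 / q ^ 2 := by
      intro α; field_simp; ring
    simp_rw [this]
    rw [Finset.sum_add_distrib, Finset.sum_sub_distrib, ← Finset.sum_div, ← Finset.mul_sum, s1, s2]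
    simp only [Finset.sum_const, Finset.card_univ, nsmul_eq_mul, ← hq]
    field_simp; ring
  have s4 : (cnt p α / m - 1 / q) ^ 2 ≤ ∑ α, (cnt p α / m - 1 / q) ^ 2 :=
    Finset.single_le_sum (f := fun α => (cnt p α / m - 1 / q) ^ 2)
      (fun _ _ => sq_nonneg _) (Finset.mem_univ α)
  rw [← s3, hα]
  set x := cnt p α / m - 1 / q with hx
  have s5 : x ≤ η / 2 + 1 / (2 * η) * x ^ 2 := by
    have : η / 2 + 1 / (2 * η) * x ^ 2 - x = (x - η) ^ 2 / (2 * η) := by field_simp; ring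
    have : 0 ≤ (x - η) ^ 2 / (2 * η) := by positivity
    linarith
  have s6 : 1 / (2 * η) * x ^ 2 ≤ 1 / (2 * η) * ∑ α, (cnt p α / m - 1 / q) ^ 2 := by gcongr
  linarith

lemma top_bound [Field F] [Fintype F] [Nonempty I] [Nonempty X] {k : ℕ} (φ : X → Fin k → F)
    (hφ : Function.Injective φ) (η : ℝ) (hη : 0 < η)
    (h : 1 / (Fintype.card I : ℝ) + 1 / Fintype.card X ≤ η ^ 2) :
    (∑ v : Fin k → F, psi I (fun x => φ x ⬝ᵥ v)) / Fintype.card (Fin k → F)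
      ≤ 1 / Fintype.card F + η := by
  classical
  have hI : (0 : ℝ) < Fintype.card I := by exact_mod_cast Fintype.card_pos
  have hF : (0 : ℝ) < Fintype.card F := by exact_mod_cast Fintype.card_pos
  have hX : (0 : ℝ) < Fintype.card X := by exact_mod_cast Fintype.card_pos
  have hV : (0 : ℝ) < Fintype.card (Fin k → F) := by exact_mod_cast Fintype.card_pos
  have hU : (0 : ℝ) < Fintype.card (I → X) := by exact_mod_cast Fintype.card_pos
  set m : ℝ := (Fintype.card I : ℝ) with hm
  set q : ℝ := (Fintype.card F : ℝ) with hq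
  set Q : ℝ := (Fintype.card (Fin k → F) : ℝ) with hQ
  set U : ℝ := (Fintype.card (I → X) : ℝ) with hUd
  set L : ℝ := (Fintype.card X : ℝ) with hL
  let E : (Fin k → F) → (I → X) → I → I → ℝ := fun v u i i' =>
    if φ (u i) ⬝ᵥ v = φ (u i') ⬝ᵥ v then (1 : ℝ) else 0
  have pair : ∀ x x' : X, ∑ v, (if φ x ⬝ᵥ v = φ x' ⬝ᵥ v then (1 : ℝ) else 0)
      ≤ Q * ((if x = x' then 1 else 0) + 1 / q) := by
    intro x x'
    by_cases hx : x = x'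
    · subst hx
      simp only [if_true, Finset.sum_const, Finset.card_univ, nsmul_eq_mul, mul_one, ← hQ]
      have : 0 ≤ 1 / q := by positivity
      nlinarith
    · have := hyper (F := F) (φ x - φ x') (sub_ne_zero.2 (hφ.ne hx))
      simp only [sub_dotProduct, sub_eq_zero] at this
      rw [if_neg hx, zero_add, mul_one_div, le_div_iff₀ hF, mul_comm]
      exact this
  have upair : ∀ i i' : I, ∑ u : I → X, (if u i = u i' then (1 : ℝ) else 0)
      ≤ U * ((if i = i' then 1 else 0) + 1 / L) := by
    intro i i'
    by_cases hi : i = i'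
    · subst hi
      simp only [if_true, Finset.sum_const, Finset.card_univ, nsmul_eq_mul, mul_one, ← hUd]
      have : 0 ≤ 1 / L := by positivity
      nlinarith
    · have := count_update (X := X) i (fun u => u i = u i') (by
        intro u a b ha hb
        simp only [Function.update_self, Function.update_of_ne (Ne.symm hi)] at ha hb
        rw [ha, hb])
      rw [if_neg hi, zero_add, mul_one_div, le_div_iff₀ hX, mul_comm]
      exact this
  have tot : ∑ v, ∑ u, ∑ i, ∑ i', E v u i i' ≤ Q * U * m ^ 2 * (η ^ 2 + 1 / q) := by
    calc ∑ v, ∑ u, ∑ i, ∑ i', E v u i i' = ∑ i, ∑ i', ∑ u, ∑ v, E v u i i' := by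
          rw [Finset.sum_comm]
          simp_rw [Finset.sum_comm (s := (Finset.univ : Finset (Fin k → F)))]
          rw [Finset.sum_comm]
          simp_rw [Finset.sum_comm (s := (Finset.univ : Finset (I → X)))]
      _ ≤ ∑ i, ∑ i', ∑ u : I → X, Q * ((if u i = u i' then 1 else 0) + 1 / q) := by
          gcongr with i _ i' _ u _
          exact pair (u i) (u i')
      _ ≤ ∑ i : I, ∑ i' : I, Q * U * ((if i = i' then 1 else 0) + 1 / L + 1 / q) := by
          gcongr with i _ i' _
          rw [← Finset.mul_sum, Finset.sum_add_distrib, mul_assoc]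
          have := upair i i'
          simp only [Finset.sum_const, Finset.card_univ, nsmul_eq_mul, ← hUd]
          gcongr
          linarith
      _ = Q * U * m ^ 2 * (1 / m + 1 / L + 1 / q) := by
          simp only [← Finset.mul_sum, Finset.sum_add_distrib, Finset.sum_ite_eq, Finset.sum_const,
            Finset.card_univ, nsmul_eq_mul, ← hm, Finset.mem_univ, if_true]
          field_simp
      _ ≤ _ := by gcongr
  have each : ∀ v : Fin k → F, psi I (fun x => φ x ⬝ᵥ v) ≤
      (∑ u : I → X, (1 / q + η / 2 + (1 / (2 * η)) * ((∑ i, ∑ i', E v u i i') / m ^ 2 - 1 / q))) / U := by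
    intro v
    unfold psi
    rw [← hm, ← hUd, mul_comm U m, ← div_div, Finset.sum_div]
    gcongr with u _
    convert plu_l2 (fun i => φ (u i) ⬝ᵥ v) η hη using 3
  rw [div_le_iff₀ hV]
  refine (Finset.sum_le_sum fun v _ => each v).trans ?_
  rw [← Finset.sum_div, div_le_iff₀ hU]
  simp only [Finset.sum_add_distrib, ← Finset.mul_sum, Finset.sum_sub_distrib, ← Finset.sum_div,
    Finset.sum_const, Finset.card_univ, nsmul_eq_mul, ← hQ, ← hUd]
  have : (∑ v, ∑ u, ∑ i, ∑ i', E v u i i') / m ^ 2 ≤ Q * U * (η ^ 2 + 1 / q) := by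
    rw [div_le_iff₀ (by positivity)]; linarith
  have h3 : 1 / (2 * η) * ((∑ v, ∑ u, ∑ i, ∑ i', E v u i i') / m ^ 2 - Q * (U * (1 / q)))
      ≤ 1 / (2 * η) * (Q * U * η ^ 2) := by
    gcongr; linarith
  have h4 : 1 / (2 * η) * (Q * U * η ^ 2) = Q * U * (η / 2) := by field_simp
  rw [h4] at h3
  have h5 : U * (Q * 1) / q = Q * (U * (1 / q)) := by ring
  have h6 : (1 / q + η) * Q * U = Q * (U * (1 / q)) + U * (Q * η) / 2 + Q * U * (η / 2) := by ring
  rw [h5, h6]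
  exact add_le_add le_rfl h3
end top

section chain
variable {I X K V : Type*} [Fintype I] [Fintype X] [DecidableEq I] [Fintype K] [Nonempty K]

lemma psi_one [Nonempty X] (c : X → K) : psi (Fin 1) c = 1 := by
  classical
  have hX : (0 : ℝ) < Fintype.card X := by exact_mod_cast Fintype.card_pos
  have h : ∀ p : Fin 1 → K, plu p = 1 := by
    intro p
    apply le_antisymm
    · obtain ⟨α, hα⟩ := plu_exists p
      rw [hα]; simp only [cnt, Fin.sum_univ_one]; split_ifs <;> norm_num
    · refine le_trans ?_ (cnt_le_plu p (p 0))
      rw [cnt, Fin.sum_univ_one, if_pos rfl]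
  unfold psi
  simp only [h]
  simp [hX.ne']

lemma sum_eval (i : I) (f : X → ℝ) :
    (Fintype.card X : ℝ) * ∑ u : I → X, f (u i) = Fintype.card (I → X) * ∑ x, f x := by
  have h1 : ∑ z : (I → X) × X, f (z.2) = ∑ z : (I → X) × X, f (z.1 i) := by
    let e : (I → X) × X ≃ (I → X) × X :=
      { toFun := fun z => (Function.update z.1 i z.2, z.1 i)
        invFun := fun z => (Function.update z.1 i z.2, z.1 i)
        left_inv := fun z => by simp
        right_inv := fun z => by simp }
    rw [← Equiv.sum_comp e (fun z => f (z.1 i))]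
    refine Finset.sum_congr rfl fun z _ => ?_
    simp [e]
  rw [Fintype.sum_prod_type, Fintype.sum_prod_type] at h1
  simp only [Finset.sum_const, Finset.card_univ, nsmul_eq_mul] at h1
  rw [h1, Finset.mul_sum]

open Classical in
lemma psi_ge [Nonempty X] [Nonempty I] (c : X → K) (α : K) :
    (∑ x, if c x = α then (1 : ℝ) else 0) / Fintype.card X ≤ psi I c := by
  have hX : (0 : ℝ) < Fintype.card X := by exact_mod_cast Fintype.card_pos
  have hI : (0 : ℝ) < Fintype.card I := by exact_mod_cast Fintype.card_pos
  have hU : (0 : ℝ) < Fintype.card (I → X) := by exact_mod_cast Fintype.card_pos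
  unfold psi
  rw [div_le_div_iff₀ hX (by positivity)]
  have h1 : ∑ u : I → X, cnt (fun i => c (u i)) α ≤ ∑ u : I → X, plu (fun i => c (u i)) :=
    Finset.sum_le_sum fun u _ => cnt_le_plu _ α
  have h2 : (Fintype.card X : ℝ) * ∑ u : I → X, cnt (fun i => c (u i)) α =
      Fintype.card I * (Fintype.card (I → X) * ∑ x, if c x = α then (1 : ℝ) else 0) := by
    unfold cnt
    rw [Finset.sum_comm, Finset.mul_sum]
    rw [Finset.sum_congr rfl fun i _ => sum_eval i (fun x => if c x = α then (1 : ℝ) else 0)]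
    simp
  have h3 := mul_le_mul_of_nonneg_left h1 hX.le
  rw [h2] at h3
  linarith

lemma chain_bound [Fintype V] [Nonempty V] [Nonempty X] (col : V → V → K) (n T : ℕ) (γ κ : ℝ)
    (hγ : 0 < γ) (hκ : 0 ≤ κ) (hT : γ * √((2 : ℝ) ^ T) ≤ 1) (g : Fin n → V) (φ : X → V)
    (hg : ∀ s < T, goodAt (Fin (2 ^ s)) col n (γ * 2 ^ s) ((2 * 2 ^ s + 1) * κ) g) :
    ∑ j, psi (Fin (2 ^ T)) (fun x => col (φ x) (g j)) ≤
      n * ((∑ v, psi (Fin (2 ^ T)) (fun x => col (φ x) v)) / Fintype.card V)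
        + T * (7 * Fintype.card K * γ * n + 3 * κ / γ) := by
  have hV : (0 : ℝ) < Fintype.card V := by exact_mod_cast Fintype.card_pos
  let A : ℕ → ℝ := fun s => ∑ j, psi (Fin (2 ^ s)) (fun x => col (φ x) (g j))
  let B : ℕ → ℝ := fun s => (∑ v, psi (Fin (2 ^ s)) (fun x => col (φ x) v)) / Fintype.card V
  have step : ∀ s < T, A (s + 1) - A s ≤ n * (B (s + 1) - B s)
      + (7 * Fintype.card K * γ * n + 3 * κ / γ) := by
    intro s hs
    have hm1 : (1 : ℝ) ≤ 2 ^ s := one_le_pow₀ (by norm_num)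
    have hm : (0 : ℝ) < 2 ^ s := by positivity
    have hcard : (Fintype.card (Fin (2 ^ s)) : ℝ) = 2 ^ s := by simp
    have hss : √((2 : ℝ) ^ s) * √((2 : ℝ) ^ s) = 2 ^ s := Real.mul_self_sqrt hm.le
    have hlam : γ * √((2 : ℝ) ^ s) * √(Fintype.card (Fin (2 ^ s)) : ℝ) = γ * 2 ^ s := by
      rw [hcard, mul_assoc, hss]
    have hβ1 : γ * √((2 : ℝ) ^ s) ≤ 1 := by
      refine le_trans ?_ hT
      gcongr
      · norm_num
    have hgs := hg s hs
    rw [← hlam] at hgs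
    have := level (I := Fin (2 ^ s)) col n (γ * √((2 : ℝ) ^ s)) _ (by positivity) hβ1 g φ hgs
    rw [hlam] at this
    have pe : ∀ c : X → K, psi (Fin (2 ^ s) ⊕ Fin (2 ^ s)) c = psi (Fin (2 ^ (s + 1))) c := by
      intro c
      apply psi_equiv
      exact finSumFinEquiv.trans (finCongr (by ring))
    simp only [pe, Finset.sum_sub_distrib] at this
    have hA : A (s + 1) - A s = ∑ j, psi (Fin (2 ^ (s + 1))) (fun x => col (φ x) (g j))
      - ∑ j, psi (Fin (2 ^ s)) (fun x => col (φ x) (g j)) := rfl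
    have hB : B (s + 1) - B s = (∑ v, psi (Fin (2 ^ (s + 1))) (fun x => col (φ x) v)
      - ∑ v, psi (Fin (2 ^ s)) (fun x => col (φ x) v)) / Fintype.card V := by
      simp only [B]; ring
    rw [← hA, ← hB, mul_pow, sq (√((2 : ℝ) ^ s)), hss] at this
    have hl : 0 < γ * 2 ^ s := by positivity
    refine le_of_mul_le_mul_left (this.trans ?_) hl
    have e : γ * 2 ^ s * (3 * κ / γ) = 3 * 2 ^ s * κ := by field_simp
    have e2 : (2 * 2 ^ s + 1) * κ ≤ 3 * 2 ^ s * κ := by gcongr; linarith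
    rw [mul_add (γ * 2 ^ s), mul_add (γ * 2 ^ s), e]
    linarith
  have hp0 : ∀ c : X → K, psi (Fin (2 ^ 0)) c = 1 := fun c =>
    (psi_equiv (finCongr (pow_zero 2)) c).trans (psi_one c)
  have A0 : A 0 = n := by
    simp only [A, hp0]; simp
  have B0 : B 0 = 1 := by
    simp only [B, hp0]; simp [hV.ne']
  have all : ∀ s ≤ T, A s - A 0 ≤ n * (B s - B 0)
      + s * (7 * Fintype.card K * γ * n + 3 * κ / γ) := by
    intro s
    induction s with
    | zero => intro _; simp
    | succ s ih =>
      intro hs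
      have h1 := ih (by omega)
      have h2 := step s (by omega)
      push_cast
      linarith
  have := all T le_rfl
  rw [A0, B0] at this
  change A T ≤ n * B T + _
  linarith
end chain

lemma decode {F : Type} [Field F] [Fintype F] {k n T : ℕ} (hn : 0 < n) (ε γ κ : ℝ) (hε : 0 < ε)
    (hγ : 0 < γ) (hκ : 0 ≤ κ) (hT : γ * √((2 : ℝ) ^ T) ≤ 1) (hT2 : 8 / ε ^ 2 ≤ 2 ^ T)
    (hsmall : T * (7 * Fintype.card F * γ * n + 3 * κ / γ) ≤ n * (ε / 2))
    (G : Matrix (Fin k) (Fin n) F)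
    (hg : ∀ s < T, goodAt (Fin (2 ^ s)) (fun x v : Fin k → F => x ⬝ᵥ v) n (γ * 2 ^ s)
      ((2 * 2 ^ s + 1) * κ) (fun j i => G i j)) :
    listDecodable (Set.range fun x : Fin k → F => Matrix.vecMul x G)
      (1 - 1 / (Fintype.card F : ℝ) - ε) (8 / ε ^ 2) := by
  classical
  intro y
  by_contra hcon
  push Not at hcon
  set ρ : ℝ := 1 - 1 / (Fintype.card F : ℝ) - ε with hρ
  have hnR : (0 : ℝ) < n := by exact_mod_cast hn
  let X := {x : Fin k → F // relDist (Matrix.vecMul x G) y < ρ}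
  have hcard : 8 / ε ^ 2 < (Fintype.card X : ℝ) := by
    refine hcon.trans_le ?_
    have hsub : {c | (c ∈ Set.range fun x : Fin k → F => Matrix.vecMul x G) ∧ relDist c y < ρ}
        ⊆ Set.range (fun x : X => Matrix.vecMul x.1 G) := by
      rintro c ⟨⟨x, rfl⟩, hc⟩
      exact ⟨⟨x, hc⟩, rfl⟩
    have h1 := Set.ncard_le_ncard hsub (Set.toFinite _)
    have h2 : (Set.range (fun x : X => Matrix.vecMul x.1 G)).ncard ≤ Fintype.card X := by
      rw [← Set.image_univ]
      refine (Set.ncard_image_le (Set.toFinite _)).trans ?_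
      rw [Set.ncard_univ, Nat.card_eq_fintype_card]
    exact_mod_cast h1.trans h2
  have h8 : 0 < 8 / ε ^ 2 := by positivity
  have hXpos : (0 : ℝ) < Fintype.card X := h8.trans hcard
  have : Nonempty X := Fintype.card_pos_iff.1 (by exact_mod_cast hXpos)
  have hc := chain_bound (X := X) (fun x v : Fin k → F => x ⬝ᵥ v) n T γ κ hγ hκ hT
    (fun j i => G i j) (fun x => x.1) hg
  have ht := top_bound (I := Fin (2 ^ T)) (X := X) (F := F) (fun x => x.1)
    Subtype.val_injective (ε / 2) (by positivity) (by
      have a1 : 1 / (Fintype.card (Fin (2 ^ T)) : ℝ) ≤ ε ^ 2 / 8 := by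
        rw [Fintype.card_fin]; push_cast
        calc 1 / (2 : ℝ) ^ T ≤ 1 / (8 / ε ^ 2) := by gcongr
          _ = _ := by field_simp
      have a2 : 1 / (Fintype.card X : ℝ) ≤ ε ^ 2 / 8 := by
        calc 1 / (Fintype.card X : ℝ) ≤ 1 / (8 / ε ^ 2) := by gcongr
          _ = _ := by field_simp
      linarith)
  -- lower bound
  have agr : ∀ x : X, n * (1 / (Fintype.card F : ℝ) + ε) <
      ∑ j, if x.1 ⬝ᵥ (fun i => G i j) = y j then (1 : ℝ) else 0 := by
    intro x
    have hx := x.2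
    unfold relDist at hx
    rw [div_lt_iff₀ hnR] at hx
    have e : ({i | Matrix.vecMul x.1 G i ≠ y i}.ncard : ℝ)
        = n - ∑ j, if x.1 ⬝ᵥ (fun i => G i j) = y j then (1 : ℝ) else 0 := by
      rw [Set.ncard_eq_toFinset_card', Finset.sum_boole]
      have := Finset.card_filter_add_card_filter_not (s := (Finset.univ : Finset (Fin n)))
        (fun j => x.1 ⬝ᵥ (fun i => G i j) = y j)
      rw [Finset.card_univ, Fintype.card_fin] at this
      have h3 : ({i | Matrix.vecMul x.1 G i ≠ y i} : Set (Fin n)).toFinset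
        = Finset.univ.filter (fun j => ¬ x.1 ⬝ᵥ (fun i => G i j) = y j) := by
        ext j
        rw [Set.mem_toFinset, Finset.mem_filter]
        exact ⟨fun h => ⟨Finset.mem_univ _, h⟩, fun h => h.2⟩
      rw [h3, eq_sub_iff_add_eq, add_comm]
      exact_mod_cast this
    rw [e] at hx
    have hρn : ρ * n = (1 - 1 / (Fintype.card F : ℝ) - ε) * n := congrArg (· * (n : ℝ)) hρ
    linarith
  have low : n * (1 / (Fintype.card F : ℝ) + ε) <
      ∑ j, psi (Fin (2 ^ T)) (fun x : X => x.1 ⬝ᵥ (fun i => G i j)) := by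
    calc _ < (∑ x : X, ∑ j, if x.1 ⬝ᵥ (fun i => G i j) = y j then (1 : ℝ) else 0)
          / Fintype.card X := by
          rw [lt_div_iff₀ hXpos]
          calc _ = ∑ x : X, n * (1 / (Fintype.card F : ℝ) + ε) := by
                rw [Finset.sum_const, Finset.card_univ, nsmul_eq_mul]; ring
            _ < _ := Finset.sum_lt_sum_of_nonempty Finset.univ_nonempty fun x _ => agr x
      _ = ∑ j, (∑ x : X, if x.1 ⬝ᵥ (fun i => G i j) = y j then (1 : ℝ) else 0)
          / Fintype.card X := by
          rw [Finset.sum_comm, Finset.sum_div]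
      _ ≤ _ := Finset.sum_le_sum fun j _ => by
          convert psi_ge (I := Fin (2 ^ T)) (fun x : X => x.1 ⬝ᵥ (fun i => G i j)) (y j)
  have ht2 := mul_le_mul_of_nonneg_left ht hnR.le
  have hc2 := hc.trans (add_le_add ht2 hsmall)
  have : n * (1 / (Fintype.card F : ℝ) + ε) = n * (1 / (Fintype.card F : ℝ) + ε / 2)
    + n * (ε / 2) := by ring
  rw [this] at low
  exact absurd low (not_lt.2 hc2)

open Classical in
lemma bad_count {F : Type} [Field F] [Fintype F] (k n T : ℕ) (γ : ℝ)
    (hk : 100 * T ≤ k) :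
    ((Finset.univ.filter fun g : Fin n → Fin k → F => ∃ s < T,
      ¬ goodAt (Fin (2 ^ s)) (fun x v : Fin k → F => x ⬝ᵥ v) n (γ * 2 ^ s)
      ((2 * 2 ^ s + 1) * Real.log (Fintype.card (Fin k → F))) g).card : ℝ)
      ≤ 0.01 * Fintype.card (Fin n → Fin k → F) := by
  set V := Fin k → F with hVd
  have hV : (0 : ℝ) < Fintype.card V := by exact_mod_cast Fintype.card_pos
  set Q : ℝ := (Fintype.card V : ℝ) with hQ
  have hkQ : 100 * (T : ℝ) ≤ Q := by
    have h1 : k < 2 ^ k := Nat.lt_two_pow_self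
    have h2 : 2 ^ k ≤ Fintype.card V := by
      change 2 ^ k ≤ Fintype.card (Fin k → F)
      rw [Fintype.card_fun, Fintype.card_fin]
      exact Nat.pow_le_pow_left Fintype.one_lt_card k
    rw [hQ]
    exact_mod_cast hk.trans (h1.le.trans h2)
  let Bd : ℕ → Finset (Fin n → V) := fun s => Finset.univ.filter fun g =>
    ¬ goodAt (Fin (2 ^ s)) (fun x v : Fin k → F => x ⬝ᵥ v) n (γ * 2 ^ s)
      ((2 * 2 ^ s + 1) * Real.log Q) g
  have sub : (Finset.univ.filter fun g : Fin n → V => ∃ s < T,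
      ¬ goodAt (Fin (2 ^ s)) (fun x v : Fin k → F => x ⬝ᵥ v) n (γ * 2 ^ s)
      ((2 * 2 ^ s + 1) * Real.log Q) g) ⊆ (Finset.range T).biUnion Bd := by
    intro g hg
    simp only [Finset.mem_filter, Finset.mem_univ, true_and] at hg
    obtain ⟨s, hs, h⟩ := hg
    simp only [Finset.mem_biUnion, Finset.mem_range, Bd, Finset.mem_filter, Finset.mem_univ,
      true_and]
    exact ⟨s, hs, h⟩
  have each : ∀ s, ((Bd s).card : ℝ) ≤ Q ^ n / Q := by
    intro s
    have := chernoff (W := Fin (2 ^ s) → V × V) n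
      (lev (Fin (2 ^ s)) (fun x v : Fin k → F => x ⬝ᵥ v) (γ * 2 ^ s))
      ((2 * 2 ^ s + 1) * Real.log Q)
    have e : Bd s = (Finset.univ.filter fun g : Fin n → V => ∃ w,
      n * ((∑ v, Real.exp (lev (Fin (2 ^ s)) (fun x v : Fin k → F => x ⬝ᵥ v) (γ * 2 ^ s) w v))
        / Fintype.card V - 1) + ((2 * 2 ^ s + 1) * Real.log Q)
      < ∑ j, lev (Fin (2 ^ s)) (fun x v : Fin k → F => x ⬝ᵥ v) (γ * 2 ^ s) w (g j)) := by
      ext g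
      simp only [Bd, Finset.mem_filter, Finset.mem_univ, true_and, goodAt, not_forall, not_le]
      rfl
    rw [e]
    refine this.trans (le_of_eq ?_)
    have hex : Real.exp (-((2 * 2 ^ s + 1) * Real.log Q)) = (Q ^ (2 * 2 ^ s + 1))⁻¹ := by
      rw [Real.exp_neg]
      congr 1
      have : ((2 * 2 ^ s + 1) * Real.log Q) = ((2 * 2 ^ s + 1 : ℕ) : ℝ) * Real.log Q := by
        push_cast; ring
      rw [this, Real.exp_nat_mul, Real.exp_log hV]
    rw [hex, Fintype.card_fun, Fintype.card_fin, Fintype.card_prod]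
    push_cast
    rw [← hQ, ← sq, ← pow_mul, pow_succ Q (2 * 2 ^ s)]
    field_simp
  calc _ ≤ (((Finset.range T).biUnion Bd).card : ℝ) := by exact_mod_cast Finset.card_le_card sub
    _ ≤ ∑ s ∈ Finset.range T, ((Bd s).card : ℝ) := by exact_mod_cast Finset.card_biUnion_le
    _ ≤ ∑ s ∈ Finset.range T, Q ^ n / Q := Finset.sum_le_sum fun s _ => each s
    _ = T * (Q ^ n / Q) := by simp
    _ = (T / Q) * Q ^ n := by ring
    _ ≤ 0.01 * Q ^ n := by
        gcongr
        rw [div_le_iff₀ hV]; linarith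
    _ = _ := by rw [Fintype.card_fun, Fintype.card_fin]; push_cast; rfl

lemma numerics (q : ℝ) (hq : 2 ≤ q) (ε : ℝ) (h0 : 0 < ε) (h1 : ε < 1 / 2) :
    ∃ (T : ℕ) (γ : ℝ), 0 < γ ∧ γ * √((2 : ℝ) ^ T) ≤ 1 ∧ 8 / ε ^ 2 ≤ (2 : ℝ) ^ T ∧
      ∃ n₀ : ℕ, ∀ n : ℕ, n₀ ≤ n → ∀ k : ℕ,
        k = ⌈(1 / (100000 * q ^ 2)) * ε ^ 2 * (n : ℝ) / (Real.log (1 / ε)) ^ 3⌉₊ →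
        0 < n ∧ 100 * T ≤ k ∧
        T * (7 * q * γ * n + 3 * (k * Real.log q) / γ) ≤ n * (ε / 2) := by
  set l := Real.log (1 / ε) with hl
  have hq0 : 0 < q := by linarith
  have hl2 : 0.69 ≤ l := by
    have : Real.log 2 ≤ l := by
      apply Real.log_le_log (by norm_num)
      rw [le_div_iff₀ h0]; linarith
    have := Real.log_two_gt_d9
    linarith
  have hl0 : 0 < l := by linarith
  have h8 : 1 ≤ 8 / ε ^ 2 := by
    rw [le_div_iff₀ (by positivity)]; nlinarith
  obtain ⟨T, hT1, hT2⟩ : ∃ T : ℕ, 8 / ε ^ 2 ≤ (2 : ℝ) ^ T ∧ (2 : ℝ) ^ T ≤ 16 / ε ^ 2 := by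
    obtain ⟨N, hN1, hN2⟩ := exists_nat_pow_near h8 (by norm_num : (1 : ℝ) < 2)
    refine ⟨N + 1, hN2.le, ?_⟩
    rw [pow_succ]
    calc (2 : ℝ) ^ N * 2 ≤ 8 / ε ^ 2 * 2 := by gcongr
      _ = _ := by ring
  have hTl : (T : ℝ) ≤ 9 * l := by
    have := Real.log_le_log (by positivity) hT2
    rw [Real.log_pow, Real.log_div (by norm_num) (by positivity), Real.log_pow] at this
    have e1 : Real.log 16 = 4 * Real.log 2 := by
      rw [show (16 : ℝ) = 2 ^ 4 by norm_num, Real.log_pow]; norm_num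
    have e2 : Real.log ε = - l := by rw [hl, one_div, Real.log_inv, neg_neg]
    rw [e1, e2] at this
    push_cast at this
    have g1 := Real.log_two_gt_d9
    have g2 := Real.log_two_lt_d9
    have hT0 : (0 : ℝ) ≤ T := Nat.cast_nonneg T
    have : (T : ℝ) * 0.69 ≤ 4 * 0.694 + 2 * l := by nlinarith
    linarith
  set γ := ε / (252 * q * l) with hγ
  have hγ0 : 0 < γ := by positivity
  set r := (1 / (100000 * q ^ 2)) * ε ^ 2 / l ^ 3 with hr
  have hr0 : 0 < r := by positivity
  refine ⟨T, γ, hγ0, ?_, hT1, ⌈(100 * T + 1) / r⌉₊ + 1, ?_⟩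
  · have : √((2 : ℝ) ^ T) ≤ 4 / ε := by
      rw [Real.sqrt_le_left (by positivity)]
      refine hT2.trans (le_of_eq ?_)
      ring
    calc γ * √((2 : ℝ) ^ T) ≤ γ * (4 / ε) := by gcongr
      _ = 4 / (252 * q * l) := by rw [hγ]; field_simp
      _ ≤ 1 := by
        rw [div_le_one (by positivity)]; nlinarith
  · intro n hn k hk
    have hn0 : 0 < n := by omega
    have hnR : (0 : ℝ) < n := by exact_mod_cast hn0
    have hnr : 100 * T + 1 ≤ r * n := by
      have h : ⌈(100 * (T : ℝ) + 1) / r⌉₊ ≤ n := by omega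
      have : (100 * (T : ℝ) + 1) / r ≤ n := Nat.ceil_le.1 h
      rw [div_le_iff₀ hr0] at this
      linarith
    have harg : (1 / (100000 * q ^ 2)) * ε ^ 2 * (n : ℝ) / l ^ 3 = r * n := by
      rw [hr]; ring
    rw [harg] at hk
    have hk1 : r * n ≤ k := by rw [hk]; exact Nat.le_ceil _
    have hk2 : (k : ℝ) ≤ 2 * (r * n) := by
      have := Nat.ceil_lt_add_one (by positivity : 0 ≤ r * n)
      rw [← hk] at this
      have hT0 : (0 : ℝ) ≤ T := Nat.cast_nonneg T
      linarith
    refine ⟨hn0, ?_, ?_⟩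
    · have : (100 * T : ℝ) ≤ k := by linarith
      exact_mod_cast this
    · have hlq : Real.log q ≤ q := (Real.log_le_sub_one_of_pos hq0).trans (by linarith)
      have hlq0 : 0 ≤ Real.log q := Real.log_nonneg (by linarith)
      calc T * (7 * q * γ * n + 3 * (k * Real.log q) / γ)
          ≤ (9 * l) * (7 * q * γ * n + 3 * ((2 * (r * n)) * q) / γ) := by gcongr
        _ = n * (ε / 4) + n * (ε * (9 * 3 * 2 * 252 / 100000) / l) := by
            rw [hγ, hr]; field_simp; ring
        _ ≤ n * (ε / 4) + n * (ε / 4) := by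
            gcongr _ + n * ?_
            rw [div_le_iff₀ hl0]; nlinarith
        _ = _ := by ring

theorem stmt0 :
    ∃ C : ℝ, 0 < C ∧
      ∀ (F : Type) [Field F] [Fintype F],
        ∃ a : ℝ, 0 < a ∧
          ∀ ε : ℝ, 0 < ε → ε < 1 / 2 →
            ∃ n₀ : ℕ, ∀ n : ℕ, n₀ ≤ n →
              ∀ kt : ℕ, kt = ⌈a * ε ^ 2 * (n : ℝ) / (Real.log (1 / ε)) ^ 3⌉₊ →
                ({G : Matrix (Fin kt) (Fin n) F |
                    listDecodable (Set.range fun x : Fin kt → F => Matrix.vecMul x G)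
                      (1 - 1 / (Fintype.card F : ℝ) - ε) (C / ε ^ 2)}.ncard : ℝ) ≥
                  0.99 * (Fintype.card (Matrix (Fin kt) (Fin n) F) : ℝ) := by
  classical
  refine ⟨8, by norm_num, ?_⟩
  intro F _ _
  have hq : (2 : ℝ) ≤ Fintype.card F := by exact_mod_cast (Fintype.one_lt_card (α := F))
  refine ⟨1 / (100000 * (Fintype.card F : ℝ) ^ 2), by positivity, ?_⟩
  intro ε h0 h1
  obtain ⟨T, γ, hγ, hT, hT2, n₀, hn₀⟩ := numerics (Fintype.card F : ℝ) hq ε h0 h1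
  refine ⟨n₀, fun n hn k hk => ?_⟩
  obtain ⟨hn0, hkT, hsmall⟩ := hn₀ n hn k hk
  have hbad := bad_count (F := F) k n T γ hkT
  set κ := Real.log (Fintype.card (Fin k → F)) with hκ
  have hκe : κ = k * Real.log (Fintype.card F) := by
    rw [hκ, Fintype.card_fun, Fintype.card_fin]; push_cast; rw [Real.log_pow]
  have hκ0 : 0 ≤ κ := by rw [hκ]; exact Real.log_natCast_nonneg _
  rw [← hκe] at hsmall
  set Bad := (Finset.univ.filter fun g : Fin n → Fin k → F => ∃ s < T,
      ¬ goodAt (Fin (2 ^ s)) (fun x v : Fin k → F => x ⬝ᵥ v) n (γ * 2 ^ s)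
      ((2 * 2 ^ s + 1) * κ) g) with hBad
  set S : Set (Matrix (Fin k) (Fin n) F) := {G | listDecodable
    (Set.range fun x : Fin k → F => Matrix.vecMul x G)
      (1 - 1 / (Fintype.card F : ℝ) - ε) (8 / ε ^ 2)} with hS
  let tr : Matrix (Fin k) (Fin n) F → (Fin n → Fin k → F) := fun G j i => G i j
  have htr : Function.Injective tr := fun A B h => by
    ext i j; exact congrFun (congrFun h j) i
  have hcompl : Sᶜ.ncard ≤ Bad.card := by
    rw [← Set.ncard_coe_finset]
    refine Set.ncard_le_ncard_of_injOn tr ?_ htr.injOn (Set.toFinite _)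
    intro G hG
    by_contra hnot
    apply hG
    refine decode hn0 ε γ κ h0 hγ hκ0 hT hT2 hsmall G ?_
    intro s hs
    by_contra hb
    apply hnot
    simp only [hBad, Finset.coe_filter, Finset.mem_univ, true_and, Set.mem_ofPred_eq]
    exact ⟨s, hs, hb⟩
  have hsum : S.ncard + Sᶜ.ncard = Fintype.card (Matrix (Fin k) (Fin n) F) := by
    rw [Set.ncard_add_ncard_compl, Nat.card_eq_fintype_card]
  have hcards : Fintype.card (Fin n → Fin k → F) = Fintype.card (Matrix (Fin k) (Fin n) F) :=
    Fintype.card_congr (Equiv.piComm (fun (_ : Fin n) (_ : Fin k) => F))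
  rw [hcards] at hbad
  have hsumR : (S.ncard : ℝ) + Sᶜ.ncard = Fintype.card (Matrix (Fin k) (Fin n) F) := by
    exact_mod_cast hsum
  have hcR : (Sᶜ.ncard : ℝ) ≤ Bad.card := by exact_mod_cast hcompl
  have : (Sᶜ.ncard : ℝ) ≤ 0.01 * Fintype.card (Matrix (Fin k) (Fin n) F) := hcR.trans hbad
  show (S.ncard : ℝ) ≥ _
  linarith
end

section
/- Let q be a prime power and let ε, γ ∈ (0, 1/2). There exist absolute constants c, C > 0 such that for all sufficiently large integers n there is an integer k̃ with k̃/n ≥ c · ε² / (log(1/γ) · log³(q/ε) · log q) for which the random linear code of dimension k̃ and block length n over F_q is ((1−1/q)(1−ε), C/ε²)-list decodable with probability at least 1−γ. -/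
open scoped BigOperators

section aux
open Finset Classical

theorem hoeff {L : ℕ} (a : Fin L → ℝ) (ha : ∀ i, |a i| ≤ 1) (h0 : ∑ i, a i = 0)
    (u : ℝ) (hu : 0 < u) (hu1 : u ≤ 1) (s : ℕ) :
    ((univ.filter fun σ : Fin s → Fin L => s * u ≤ ∑ l, a (σ l)).card : ℝ)
      ≤ Real.exp (-(s * u ^ 2 / 4)) * (L : ℝ) ^ s := by
  set lam := u / 2 with hlam
  have key : ∑ i, Real.exp (lam * a i) ≤ L * Real.exp (lam ^ 2) := by
    calc ∑ i, Real.exp (lam * a i) ≤ ∑ i : Fin L, (lam * a i + Real.exp (lam ^ 2)) := by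
          apply Finset.sum_le_sum
          intro i _
          have h1 : |lam * a i| ≤ 1 := by
            rw [abs_mul, abs_of_pos (by positivity)]
            have := ha i
            have := abs_nonneg (a i)
            nlinarith
          have h2 := Real.abs_exp_sub_one_sub_id_le h1
          have h3 := (abs_le.mp h2).2
          have h4 := Real.add_one_le_exp (lam ^ 2)
          have h5 : (lam * a i) ^ 2 ≤ lam ^ 2 := by
            have : (a i) ^ 2 ≤ 1 := by
              rw [sq_le_one_iff_abs_le_one]; exact ha i
            rw [mul_pow]; nlinarith [sq_nonneg lam]
          linarith
      _ = L * Real.exp (lam ^ 2) := by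
          rw [Finset.sum_add_distrib, ← Finset.mul_sum, h0]; simp
  calc ((univ.filter fun σ : Fin s → Fin L => s * u ≤ ∑ l, a (σ l)).card : ℝ)
      = ∑ σ : Fin s → Fin L, if s * u ≤ ∑ l, a (σ l) then (1:ℝ) else 0 := by simp
    _ ≤ ∑ σ : Fin s → Fin L, Real.exp (-(lam * s * u)) * ∏ l, Real.exp (lam * a (σ l)) := by
        apply Finset.sum_le_sum
        intro σ _
        rw [← Real.exp_sum, ← Real.exp_add, ← Finset.mul_sum]
        split_ifs with h
        · apply Real.one_le_exp
          have : 0 < lam := by positivity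
          nlinarith
        · positivity
    _ = Real.exp (-(lam * s * u)) * (∑ i, Real.exp (lam * a i)) ^ s := by
        rw [← Finset.mul_sum, Fintype.sum_pow]
    _ ≤ Real.exp (-(lam * s * u)) * (L * Real.exp (lam ^ 2)) ^ s := by
        have : 0 ≤ ∑ i, Real.exp (lam * a i) := Finset.sum_nonneg fun i _ => (Real.exp_pos _).le
        gcongr
    _ = Real.exp (-(s * u ^ 2 / 4)) * (L : ℝ) ^ s := by
        rw [mul_pow, ← Real.exp_nat_mul, mul_left_comm, ← Real.exp_add, mul_comm]
        congr 2
        rw [hlam]; ring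

theorem chernoff_s1 {V : Type} [Fintype V] [Nonempty V] (T : Finset V) (p : ℝ)
    (hT : (T.card : ℝ) ≤ p * Fintype.card V) (n : ℕ) (m : ℝ) :
    ((univ.filter fun G : Fin n → V => m ≤ ((univ.filter fun j => G j ∈ T).card : ℝ)).card : ℝ)
      ≤ Real.exp (2 * p * n - m) * (Fintype.card V : ℝ) ^ n := by
  have key : ∑ g : V, Real.exp (if g ∈ T then 1 else 0) ≤ Fintype.card V * Real.exp (2 * p) := by
    calc ∑ g : V, Real.exp (if g ∈ T then 1 else 0)
        ≤ ∑ g : V, (1 + 2 * (if g ∈ T then (1:ℝ) else 0)) := by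
          apply Finset.sum_le_sum
          intro g _
          split_ifs
          · have := Real.exp_one_lt_d9
            linarith
          · simp
      _ = Fintype.card V + 2 * T.card := by
          rw [Finset.sum_add_distrib, ← Finset.mul_sum]; simp
      _ ≤ Fintype.card V * (2 * p + 1) := by linarith
      _ ≤ _ := by
          have := Real.add_one_le_exp (2 * p)
          gcongr
  calc _ = ∑ G : Fin n → V, if m ≤ ((univ.filter fun j => G j ∈ T).card : ℝ) then (1:ℝ) else 0 := by simp
    _ ≤ ∑ G : Fin n → V, Real.exp (-m) * ∏ j, Real.exp (if G j ∈ T then 1 else 0) := by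
        apply Finset.sum_le_sum
        intro G _
        rw [← Real.exp_sum, ← Real.exp_add]
        split_ifs with h
        · apply Real.one_le_exp
          simp only [Finset.sum_boole]
          linarith
        · positivity
    _ = Real.exp (-m) * (∑ g : V, Real.exp (if g ∈ T then 1 else 0)) ^ n := by
        rw [← Finset.mul_sum, Fintype.sum_pow]
    _ ≤ Real.exp (-m) * (Fintype.card V * Real.exp (2 * p)) ^ n := by
        have : 0 ≤ ∑ g : V, Real.exp (if g ∈ T then 1 else 0) :=
          Finset.sum_nonneg fun i _ => (Real.exp_pos _).le
        gcongr
    _ = _ := by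
        rw [mul_pow, ← Real.exp_nat_mul, mul_left_comm, ← Real.exp_add, mul_comm]
        congr 2
        ring

variable {F : Type} [Field F] [Fintype F]

/-- Fraction of the family `X` whose pairing with `g` equals `α`. -/
noncomputable def frac {k s : ℕ} (X : Fin s → Fin k → F) (g : Fin k → F) (α : F) : ℝ :=
  (∑ i, if X i ⬝ᵥ g = α then (1:ℝ) else 0) / s

/-- Columns for which some symbol is over-represented by `t`. -/
noncomputable def heavy {k s : ℕ} (X : Fin s → Fin k → F) (t : ℝ) : Finset (Fin k → F) :=
  univ.filter fun g => ∃ α, 1 / (Fintype.card F : ℝ) + t ≤ frac X g α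

theorem card_ker {k : ℕ} (v : Fin k → F) (hv : v ≠ 0) :
    (∑ g : Fin k → F, if v ⬝ᵥ g = 0 then (1:ℝ) else 0) * Fintype.card F
      = Fintype.card (Fin k → F) := by
  obtain ⟨i, hi⟩ := Function.ne_iff.mp hv
  simp only [Pi.zero_apply] at hi
  have h1 : ∀ α : F, (∑ g : Fin k → F, if v ⬝ᵥ g = α then (1:ℝ) else 0)
      = ∑ g : Fin k → F, if v ⬝ᵥ g = 0 then (1:ℝ) else 0 := by
    intro α
    refine Fintype.sum_equiv (Equiv.subRight (Pi.single i (α / v i))) _ _ ?_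
    intro g
    simp [dotProduct_sub, dotProduct_single, mul_div_cancel₀ _ hi, sub_eq_zero]
  have h2 : ∑ α : F, (∑ g : Fin k → F, if v ⬝ᵥ g = α then (1:ℝ) else 0)
      = Fintype.card (Fin k → F) := by
    rw [Finset.sum_comm]; simp
  rw [← h2, Finset.sum_congr rfl fun α _ => h1 α]
  simp [mul_comm]

theorem second_moment {k L : ℕ} (X : Fin L → Fin k → F) (hX : Function.Injective X) (hL : 0 < L) :
    ∑ g, ∑ α, (frac X g α - 1 / (Fintype.card F : ℝ)) ^ 2
      ≤ (Fintype.card (Fin k → F) : ℝ) / L := by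
  set q : ℝ := (Fintype.card F : ℝ) with hq
  set N : ℝ := (Fintype.card (Fin k → F) : ℝ) with hN
  have hqpos : 0 < q := by rw [hq]; exact_mod_cast Fintype.card_pos
  have hNpos : 0 < N := by rw [hN]; exact_mod_cast Fintype.card_pos
  have hLpos : (0:ℝ) < L := by exact_mod_cast hL
  let c : (Fin k → F) → F → ℝ := fun g α => ∑ i, if X i ⬝ᵥ g = α then (1:ℝ) else 0
  have hsum : ∀ g, ∑ α, c g α = L := by
    intro g
    simp only [c]
    rw [Finset.sum_comm]; simp
  have hsq : ∑ g, ∑ α, c g α ^ 2 ≤ L * N + L * L * (N / q) := by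
    have e1 : ∀ g, ∑ α, c g α ^ 2 = ∑ a, ∑ b, if (X a - X b) ⬝ᵥ g = 0 then (1:ℝ) else 0 := by
      intro g
      simp only [c, sq, Finset.sum_mul_sum]
      rw [Finset.sum_comm]
      apply Finset.sum_congr rfl; intro a _
      rw [Finset.sum_comm]
      apply Finset.sum_congr rfl; intro b _
      simp only [ite_mul, one_mul, zero_mul, Finset.sum_ite_eq, Finset.mem_univ, if_true,
        sub_dotProduct, sub_eq_zero]
      simp only [eq_comm]
    calc ∑ g, ∑ α, c g α ^ 2 = ∑ a, ∑ b, ∑ g, if (X a - X b) ⬝ᵥ g = 0 then (1:ℝ) else 0 := by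
          rw [Finset.sum_congr rfl fun g _ => e1 g, Finset.sum_comm]
          apply Finset.sum_congr rfl; intro a _
          rw [Finset.sum_comm]
      _ ≤ ∑ a : Fin L, ∑ b : Fin L, ((if a = b then N else 0) + N / q) := by
          apply Finset.sum_le_sum; intro a _
          apply Finset.sum_le_sum; intro b _
          by_cases hab : a = b
          · subst hab
            simp only [sub_self, zero_dotProduct, if_true, Finset.sum_const, Finset.card_univ, nsmul_eq_mul, mul_one]
            have : 0 ≤ N / q := by positivity
            linarith
          · have := card_ker (X a - X b) (sub_ne_zero.mpr fun h => hab (hX h))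
            rw [if_neg hab, zero_add, le_div_iff₀ hqpos]
            exact this.le
      _ = _ := by
          simp only [Finset.sum_add_distrib, Finset.sum_ite_eq, Finset.mem_univ, if_true,
            Finset.sum_const, Finset.card_univ, nsmul_eq_mul, Fintype.card_fin]
          ring
  have e2 : ∀ g, ∑ α, (frac X g α - 1 / q) ^ 2 = (∑ α, c g α ^ 2) / L ^ 2 - 1 / q := by
    intro g
    have : ∀ α, (frac X g α - 1 / q) ^ 2 = c g α ^ 2 / L ^ 2 - 2 / (q * L) * c g α + 1 / q ^ 2 := by
      intro α
      have : frac X g α = c g α / L := rfl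
      rw [this]; field_simp; ring
    rw [Finset.sum_congr rfl fun α _ => this α, Finset.sum_add_distrib, Finset.sum_sub_distrib,
      ← Finset.mul_sum, hsum, ← Finset.sum_div]
    simp only [Finset.sum_const, Finset.card_univ, nsmul_eq_mul, ← hq]
    field_simp; ring
  rw [Finset.sum_congr rfl fun g _ => e2 g, Finset.sum_sub_distrib, ← Finset.sum_div]
  simp only [Finset.sum_const, Finset.card_univ, nsmul_eq_mul, ← hN]
  have : (∑ g, ∑ α, c g α ^ 2) / (L:ℝ) ^ 2 ≤ (L * N + L * L * (N / q)) / (L:ℝ) ^ 2 := by gcongr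
  have e3 : (L * N + L * L * (N / q)) / (L:ℝ) ^ 2 = N / L + N * (1 / q) := by field_simp
  linarith

theorem heavy_card {k L : ℕ} (X : Fin L → Fin k → F) (hX : Function.Injective X) (hL : 0 < L)
    (t : ℝ) (ht : 0 < t) :
    ((heavy X t).card : ℝ) ≤ 1 / (L * t ^ 2) * Fintype.card (Fin k → F) := by
  have h := second_moment X hX hL
  have hLpos : (0:ℝ) < L := by exact_mod_cast hL
  have h2 : ((heavy X t).card : ℝ) * t ^ 2
      ≤ ∑ g, ∑ α, (frac X g α - 1 / (Fintype.card F : ℝ)) ^ 2 := by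
    calc ((heavy X t).card : ℝ) * t ^ 2 = ∑ g ∈ heavy X t, t ^ 2 := by simp
      _ ≤ ∑ g ∈ heavy X t, ∑ α, (frac X g α - 1 / (Fintype.card F : ℝ)) ^ 2 := by
          apply Finset.sum_le_sum
          intro g hg
          simp only [heavy, Finset.mem_filter, Finset.mem_univ, true_and] at hg
          obtain ⟨α, hα⟩ := hg
          refine le_trans ?_ (Finset.single_le_sum
            (f := fun α => (frac X g α - 1 / (Fintype.card F : ℝ)) ^ 2)
            (fun _ _ => sq_nonneg _) (Finset.mem_univ α))
          have : t ≤ frac X g α - 1 / (Fintype.card F : ℝ) := by linarith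
          gcongr
      _ ≤ _ := Finset.sum_le_sum_of_subset_of_nonneg (Finset.subset_univ _)
            fun g _ _ => Finset.sum_nonneg fun _ _ => sq_nonneg _
  have h3 := h2.trans h
  rw [div_mul_eq_mul_div, one_mul, le_div_iff₀ (by positivity)]
  rw [le_div_iff₀ hLpos] at h3
  linarith

/-- A column on which the subsample `σ` misrepresents `X`. -/
def failAt {k L s : ℕ} (X : Fin L → Fin k → F) (σ : Fin s → Fin L) (t : ℝ) (g : Fin k → F) : Prop :=
  ∃ α, t ≤ |frac (X ∘ σ) g α - frac X g α|

theorem frac_nonneg {k s : ℕ} (X : Fin s → Fin k → F) (g : Fin k → F) (α : F) : 0 ≤ frac X g α := by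
  unfold frac
  apply div_nonneg _ (Nat.cast_nonneg _)
  apply Finset.sum_nonneg; intro i _; split_ifs <;> norm_num

theorem frac_le_one {k s : ℕ} (X : Fin s → Fin k → F) (g : Fin k → F) (α : F) : frac X g α ≤ 1 := by
  unfold frac
  apply div_le_one_of_le₀ _ (Nat.cast_nonneg _)
  rw [Finset.sum_boole]
  exact_mod_cast (Finset.card_le_univ _).trans (by simp)

theorem fail_count {k L : ℕ} (X : Fin L → Fin k → F) (hL : 0 < L) (t : ℝ) (ht : 0 < t) (ht1 : t ≤ 1)
    (s : ℕ) (hs : 0 < s) (g : Fin k → F) :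
    ((univ.filter fun σ : Fin s → Fin L => failAt X σ t g).card : ℝ)
      ≤ Fintype.card F * (2 * (Real.exp (-(s * t ^ 2 / 4)) * (L : ℝ) ^ s)) := by
  have hLpos : (0:ℝ) < L := by exact_mod_cast hL
  have hspos : (0:ℝ) < s := by exact_mod_cast hs
  let a : F → Fin L → ℝ := fun α i => (if X i ⬝ᵥ g = α then (1:ℝ) else 0) - frac X g α
  have ha1 : ∀ α i, |a α i| ≤ 1 := by
    intro α i
    have h1 := frac_nonneg X g α
    have h2 := frac_le_one X g α
    simp only [a]
    rw [abs_le]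
    split_ifs <;> constructor <;> linarith
  have ha0 : ∀ α, ∑ i, a α i = 0 := by
    intro α
    simp only [a]
    rw [Finset.sum_sub_distrib]
    simp only [Finset.sum_const, Finset.card_univ, nsmul_eq_mul, Fintype.card_fin, frac]
    field_simp; ring
  have hsub : (univ.filter fun σ : Fin s → Fin L => failAt X σ t g) ⊆
      univ.biUnion fun α => (univ.filter fun σ : Fin s → Fin L => s * t ≤ ∑ l, a α (σ l)) ∪
        (univ.filter fun σ : Fin s → Fin L => s * t ≤ ∑ l, -(a α (σ l))) := by
    intro σ hσ
    simp only [Finset.mem_filter, Finset.mem_univ, true_and] at hσ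
    obtain ⟨α, hα⟩ := hσ
    simp only [Finset.mem_biUnion, Finset.mem_univ, true_and, Finset.mem_union, Finset.mem_filter]
    refine ⟨α, ?_⟩
    have e : ∑ l, a α (σ l) = s * (frac (X ∘ σ) g α - frac X g α) := by
      simp only [a]
      rw [Finset.sum_sub_distrib]
      simp only [Finset.sum_const, Finset.card_univ, nsmul_eq_mul, Fintype.card_fin]
      have : (∑ l, if X (σ l) ⬝ᵥ g = α then (1:ℝ) else 0) = s * frac (X ∘ σ) g α := by
        simp only [frac, Function.comp]; field_simp
      rw [this]; ring
    rw [Finset.sum_neg_distrib, e, ← mul_neg]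
    rcases le_abs.mp hα with h | h
    · left; gcongr
    · right; gcongr
  calc ((univ.filter fun σ : Fin s → Fin L => failAt X σ t g).card : ℝ)
      ≤ ((univ.biUnion fun α => (univ.filter fun σ : Fin s → Fin L => s * t ≤ ∑ l, a α (σ l)) ∪
        (univ.filter fun σ : Fin s → Fin L => s * t ≤ ∑ l, -(a α (σ l)))).card : ℝ) := by
        exact_mod_cast Finset.card_le_card hsub
    _ ≤ ∑ α : F, ((((univ.filter fun σ : Fin s → Fin L => s * t ≤ ∑ l, a α (σ l)) ∪
        (univ.filter fun σ : Fin s → Fin L => s * t ≤ ∑ l, -(a α (σ l)))).card : ℕ) : ℝ) := by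
        exact_mod_cast Finset.card_biUnion_le
    _ ≤ ∑ α : F, (2 * (Real.exp (-(s * t ^ 2 / 4)) * (L : ℝ) ^ s)) := by
        apply Finset.sum_le_sum; intro α _
        have h1 := hoeff (a α) (ha1 α) (ha0 α) t ht ht1 s
        have h2 := hoeff (fun i => -(a α i)) (fun i => by rw [abs_neg]; exact ha1 α i)
          (by rw [Finset.sum_neg_distrib, ha0, neg_zero]) t ht ht1 s
        have h3 := Finset.card_union_le (univ.filter fun σ : Fin s → Fin L => s * t ≤ ∑ l, a α (σ l))
          (univ.filter fun σ : Fin s → Fin L => s * t ≤ ∑ l, -(a α (σ l)))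
        have h4 : ((((univ.filter fun σ : Fin s → Fin L => s * t ≤ ∑ l, a α (σ l)) ∪
          (univ.filter fun σ : Fin s → Fin L => s * t ≤ ∑ l, -(a α (σ l)))).card : ℕ) : ℝ) ≤ 
          ((univ.filter fun σ : Fin s → Fin L => s * t ≤ ∑ l, a α (σ l)).card : ℝ) +
          ((univ.filter fun σ : Fin s → Fin L => s * t ≤ ∑ l, -(a α (σ l))).card : ℝ) := by
          exact_mod_cast h3
        linarith
    _ = _ := by simp

theorem sample {k L n s : ℕ} (X : Fin L → Fin k → F) (hX : Function.Injective X) (hL : 0 < L)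
    (t : ℝ) (ht : 0 < t) (ht1 : t ≤ 1 / 2) (hs : 0 < s)
    (hη : Fintype.card F * (2 * Real.exp (-(s * (t / 4) ^ 2 / 4))) ≤ 1 / (8 * L))
    (G : Fin n → Fin k → F) (m : ℝ) (hm : 0 ≤ m)
    (hG : ∀ S : Fin s → Fin k → F,
      ((heavy S (3 * t / 4)).card : ℝ) ≤ 5 / (L * t ^ 2) * Fintype.card (Fin k → F) →
      ((univ.filter fun j => G j ∈ heavy S (3 * t / 4)).card : ℝ) < m) :
    ((univ.filter fun j => G j ∈ heavy X t).card : ℝ) ≤ 2 * m := by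
  set N : ℝ := (Fintype.card (Fin k → F) : ℝ) with hN
  have hNpos : 0 < N := by rw [hN]; exact_mod_cast Fintype.card_pos
  have hLpos : (0:ℝ) < L := by exact_mod_cast hL
  have hL1 : (1:ℝ) ≤ L := by exact_mod_cast hL
  set J := univ.filter fun j => G j ∈ heavy X t with hJ
  set η : ℝ := 1 / (8 * L) with hηdef
  have hη1 : η ≤ 1 / 8 := by
    rw [hηdef]; apply one_div_le_one_div_of_le (by norm_num); linarith
  rcases Nat.eq_zero_or_pos J.card with h0 | hJpos
  · rw [h0]; push_cast; linarith
  have hJpos' : (0:ℝ) < J.card := by exact_mod_cast hJpos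
  have hfc : ∀ g : Fin k → F, (∑ σ : Fin s → Fin L, if failAt X σ (t / 4) g then (1:ℝ) else 0)
      ≤ η * (L:ℝ) ^ s := by
    intro g
    have := fail_count X hL (t / 4) (by positivity) (by linarith) s hs g
    rw [Finset.sum_boole]
    refine this.trans ?_
    have : (0:ℝ) ≤ (L:ℝ) ^ s := by positivity
    nlinarith
  let fJ : (Fin s → Fin L) → ℝ := fun σ => ∑ j ∈ J, if failAt X σ (t / 4) (G j) then (1:ℝ) else 0
  let fG : (Fin s → Fin L) → ℝ := fun σ => ∑ g, if failAt X σ (t / 4) g then (1:ℝ) else 0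
  have hfJ0 : ∀ σ, 0 ≤ fJ σ := fun σ => Finset.sum_nonneg fun j _ => by split_ifs <;> norm_num
  have hfG0 : ∀ σ, 0 ≤ fG σ := fun σ => Finset.sum_nonneg fun j _ => by split_ifs <;> norm_num
  have hJs : ∑ σ, fJ σ ≤ J.card * (η * (L:ℝ) ^ s) := by
    simp only [fJ]
    rw [Finset.sum_comm]
    refine (Finset.sum_le_sum fun j _ => hfc (G j)).trans ?_
    simp
  have hGs : ∑ σ, fG σ ≤ N * (η * (L:ℝ) ^ s) := by
    simp only [fG]
    rw [Finset.sum_comm]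
    refine (Finset.sum_le_sum fun j _ => hfc j).trans ?_
    simp [hN]
  haveI : Nonempty (Fin L) := ⟨⟨0, hL⟩⟩
  obtain ⟨σ, -, hσ⟩ : ∃ σ ∈ (univ : Finset (Fin s → Fin L)),
      fJ σ * N + fG σ * J.card ≤ 2 * η * J.card * N := by
    apply Finset.exists_le_of_sum_le Finset.univ_nonempty
    rw [Finset.sum_add_distrib, ← Finset.sum_mul, ← Finset.sum_mul]
    simp only [Finset.sum_const, Finset.card_univ, nsmul_eq_mul, Fintype.card_fun, Fintype.card_fin]
    push_cast
    have h1 := mul_le_mul_of_nonneg_right hJs hNpos.le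
    have h2 := mul_le_mul_of_nonneg_right hGs hJpos'.le
    linarith
  have hA : fJ σ ≤ J.card / 2 := by
    have h1 : fJ σ * N ≤ (J.card / 2) * N := by
      have := mul_nonneg (hfG0 σ) hJpos'.le
      have h3 : 2 * η * (J.card * N) ≤ 2 * (1 / 8) * (J.card * N) := by gcongr
      have : 0 < J.card * N := by positivity
      linarith
    exact le_of_mul_le_mul_right h1 hNpos
  have hB : fG σ ≤ 2 * η * N := by
    have h1 : fG σ * J.card ≤ (2 * η * N) * J.card := by
      have := mul_nonneg (hfJ0 σ) hNpos.le
      linarith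
    exact le_of_mul_le_mul_right h1 hJpos'
  have hcard : ((heavy (X ∘ σ) (3 * t / 4)).card : ℝ) ≤ 5 / (L * t ^ 2) * N := by
    have hsub : heavy (X ∘ σ) (3 * t / 4) ⊆
        heavy X (t / 2) ∪ univ.filter fun g => failAt X σ (t / 4) g := by
      intro g hg
      simp only [heavy, Finset.mem_union, Finset.mem_filter, Finset.mem_univ, true_and] at hg ⊢
      by_contra hcon
      push Not at hcon
      obtain ⟨h1, h2⟩ := hcon
      obtain ⟨α, hα⟩ := hg
      apply h2
      refine ⟨α, ?_⟩
      rw [le_abs]; left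
      have := h1 α
      linarith
    have h1 : ((heavy (X ∘ σ) (3 * t / 4)).card : ℝ) ≤ (heavy X (t / 2)).card + fG σ := by
      simp only [fG]
      rw [Finset.sum_boole]
      exact_mod_cast (Finset.card_le_card hsub).trans (Finset.card_union_le _ _)
    have h2 := heavy_card X hX hL (t / 2) (by positivity)
    have h3 : 1 / (L * (t / 2) ^ 2) + 2 * η ≤ 5 / (L * t ^ 2) := by
      have e1 : 1 / (L * (t / 2) ^ 2) = 4 / (L * t ^ 2) := by field_simp; norm_num
      have e2 : 2 * η ≤ 1 / (L * t ^ 2) := by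
        rw [hηdef, le_div_iff₀ (by positivity)]
        have : 2 * (1 / (8 * (L:ℝ))) * (L * t ^ 2) = t ^ 2 / 4 := by field_simp; norm_num
        rw [this]; nlinarith
      have e3 : 5 / (L * t ^ 2) = 4 / (L * t ^ 2) + 1 / (L * t ^ 2) := by ring
      linarith
    have h4 := mul_le_mul_of_nonneg_right h3 hNpos.le
    linarith
  have hlt := hG (X ∘ σ) hcard
  have hsub2 : J ⊆ (univ.filter fun j => G j ∈ heavy (X ∘ σ) (3 * t / 4)) ∪
      J.filter fun j => failAt X σ (t / 4) (G j) := by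
    intro j hj
    have hj' := hj
    simp only [hJ, heavy, Finset.mem_filter, Finset.mem_univ, true_and] at hj'
    obtain ⟨α, hα⟩ := hj'
    rw [Finset.mem_union, Finset.mem_filter, Finset.mem_filter]
    by_cases hf : failAt X σ (t / 4) (G j)
    · exact Or.inr ⟨hj, hf⟩
    · left
      refine ⟨Finset.mem_univ _, ?_⟩
      simp only [heavy, Finset.mem_filter, Finset.mem_univ, true_and]
      refine ⟨α, ?_⟩
      by_contra hcon
      push Not at hcon
      apply hf
      refine ⟨α, ?_⟩
      rw [le_abs]; right
      linarith
  have h5 : (J.card : ℝ) ≤ ((univ.filter fun j => G j ∈ heavy (X ∘ σ) (3 * t / 4)).card : ℝ) + fJ σ := by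
    simp only [fJ]
    rw [Finset.sum_boole]
    exact_mod_cast (Finset.card_le_card hsub2).trans (Finset.card_union_le _ _)
  linarith

theorem bad_count_s1 {k n s : ℕ} (p m τ : ℝ) :
    ((univ.filter fun G : Fin n → Fin k → F => ∃ S : Fin s → Fin k → F,
      ((heavy S τ).card : ℝ) ≤ p * Fintype.card (Fin k → F) ∧
      m ≤ ((univ.filter fun j => G j ∈ heavy S τ).card : ℝ)).card : ℝ)
    ≤ (Fintype.card (Fin k → F) : ℝ) ^ s *
      (Real.exp (2 * p * n - m) * (Fintype.card (Fin k → F) : ℝ) ^ n) := by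
  have hsub : (univ.filter fun G : Fin n → Fin k → F => ∃ S : Fin s → Fin k → F,
      ((heavy S τ).card : ℝ) ≤ p * Fintype.card (Fin k → F) ∧
      m ≤ ((univ.filter fun j => G j ∈ heavy S τ).card : ℝ)) ⊆
      (univ.filter fun S : Fin s → Fin k → F =>
        ((heavy S τ).card : ℝ) ≤ p * Fintype.card (Fin k → F)).biUnion fun S =>
        univ.filter fun G : Fin n → Fin k → F =>
          m ≤ ((univ.filter fun j => G j ∈ heavy S τ).card : ℝ) := by
    intro G hG
    simp only [Finset.mem_filter, Finset.mem_univ, true_and, Finset.mem_biUnion] at hG ⊢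
    exact hG
  have h1 : ((univ.filter fun G : Fin n → Fin k → F => ∃ S : Fin s → Fin k → F,
      ((heavy S τ).card : ℝ) ≤ p * Fintype.card (Fin k → F) ∧
      m ≤ ((univ.filter fun j => G j ∈ heavy S τ).card : ℝ)).card : ℝ) ≤
      ∑ S ∈ (univ.filter fun S : Fin s → Fin k → F =>
        ((heavy S τ).card : ℝ) ≤ p * Fintype.card (Fin k → F)),
        ((univ.filter fun G : Fin n → Fin k → F =>
          m ≤ ((univ.filter fun j => G j ∈ heavy S τ).card : ℝ)).card : ℝ) := by
    exact_mod_cast (Finset.card_le_card hsub).trans Finset.card_biUnion_le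
  refine h1.trans ?_
  refine (Finset.sum_le_sum (g := fun _ => Real.exp (2 * p * n - m) *
    (Fintype.card (Fin k → F) : ℝ) ^ n) fun S hS => ?_).trans ?_
  · have := chernoff_s1 (heavy S τ) p (Finset.mem_filter.mp hS).2 n m
    refine le_trans (le_of_eq ?_) this
    congr!
  · rw [Finset.sum_const, nsmul_eq_mul]
    gcongr
    refine (Nat.cast_le.mpr (Finset.card_le_univ _)).trans ?_
    simp

theorem dyadic (a : ℝ) (ha : a ≤ 1) (M : ℕ) :
    a ≤ (1 / 2) ^ M + ∑ i ∈ Finset.range M, (1 / 2 : ℝ) ^ i *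
      (if (1 / 2 : ℝ) ^ (i + 1) ≤ a then 1 else 0) := by
  induction M with
  | zero => simpa using ha
  | succ M ih =>
    rw [Finset.sum_range_succ]
    split_ifs with h
    · have : (0:ℝ) < (1 / 2) ^ (M + 1) := by positivity
      linarith
    · have : 0 ≤ ∑ i ∈ Finset.range M, (1 / 2 : ℝ) ^ i *
          (if (1 / 2 : ℝ) ^ (i + 1) ≤ a then 1 else 0) :=
        Finset.sum_nonneg fun i _ => by split_ifs <;> positivity
      push Not at h
      linarith

theorem agree_bound {k L n M : ℕ} (X : Fin L → Fin k → F) (hX : Function.Injective X) (hL : 0 < L)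
    (s : ℕ → ℕ) (hs : ∀ i, 0 < s i)
    (hη : ∀ i, Fintype.card F * (2 * Real.exp (-(s i * ((1 / 2 : ℝ) ^ (i + 1) / 4) ^ 2 / 4)))
      ≤ 1 / (8 * L))
    (G : Fin n → Fin k → F)
    (hG : ∀ i ∈ Finset.range M, ∀ S : Fin (s i) → Fin k → F,
      ((heavy S (3 * (1 / 2 : ℝ) ^ (i + 1) / 4)).card : ℝ)
        ≤ 5 / (L * ((1 / 2 : ℝ) ^ (i + 1)) ^ 2) * Fintype.card (Fin k → F) →
      ((univ.filter fun j => G j ∈ heavy S (3 * (1 / 2 : ℝ) ^ (i + 1) / 4)).card : ℝ)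
        < 20 / (L * ((1 / 2 : ℝ) ^ (i + 1)) ^ 2) * n)
    (y : Fin n → F) :
    ∑ j, (frac X (G j) (y j) - 1 / (Fintype.card F : ℝ)) ≤ n * ((1 / 2) ^ M + 160 * 2 ^ M / L) := by
  have hLpos : (0:ℝ) < L := by exact_mod_cast hL
  have hq : (0:ℝ) ≤ 1 / (Fintype.card F : ℝ) := by positivity
  have hlev : ∀ i ∈ Finset.range M, (1 / 2 : ℝ) ^ i * ∑ j, (if (1 / 2 : ℝ) ^ (i + 1) ≤
      frac X (G j) (y j) - 1 / (Fintype.card F : ℝ) then (1:ℝ) else 0) ≤ 160 * n / L * 2 ^ i := by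
    intro i hi
    have h1 := sample X hX hL ((1 / 2 : ℝ) ^ (i + 1)) (by positivity)
      (by rw [pow_succ]; have : (1 / 2 : ℝ) ^ i ≤ 1 := pow_le_one₀ (by norm_num) (by norm_num)
          linarith) (hs i) (hη i) G (20 / (L * ((1 / 2 : ℝ) ^ (i + 1)) ^ 2) * n) (by positivity)
      (hG i hi)
    have h2 : ∑ j, (if (1 / 2 : ℝ) ^ (i + 1) ≤
      frac X (G j) (y j) - 1 / (Fintype.card F : ℝ) then (1:ℝ) else 0) ≤
      ((univ.filter fun j => G j ∈ heavy X ((1 / 2 : ℝ) ^ (i + 1))).card : ℝ) := by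
      rw [Finset.sum_boole]
      norm_cast
      apply Finset.card_le_card
      intro j hj
      simp only [heavy, Finset.mem_filter, Finset.mem_univ, true_and] at hj ⊢
      exact ⟨y j, by linarith⟩
    calc _ ≤ (1 / 2 : ℝ) ^ i * (2 * (20 / (L * ((1 / 2 : ℝ) ^ (i + 1)) ^ 2) * n)) := by
          gcongr; exact h2.trans h1
      _ = 160 * n / L * 2 ^ i := by
          have e : (1 / 2 : ℝ) ^ i * 2 ^ i = 1 := by rw [← mul_pow]; norm_num
          have e2 : (1 / 2 : ℝ) ^ (i + 1) = (1 / 2) ^ i / 2 := by rw [pow_succ]; ring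
          rw [e2]
          have ha : (0:ℝ) < (1 / 2) ^ i := by positivity
          have e3 : (2 : ℝ) ^ i = 1 / (1 / 2) ^ i := by rw [eq_div_iff ha.ne']; linarith
          rw [e3]
          generalize (1 / 2 : ℝ) ^ i = a at *
          field_simp
          ring
  calc ∑ j, (frac X (G j) (y j) - 1 / (Fintype.card F : ℝ))
      ≤ ∑ j : Fin n, ((1 / 2 : ℝ) ^ M + ∑ i ∈ Finset.range M, (1 / 2 : ℝ) ^ i *
      (if (1 / 2 : ℝ) ^ (i + 1) ≤ frac X (G j) (y j) - 1 / (Fintype.card F : ℝ) then 1 else 0)) := by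
        apply Finset.sum_le_sum; intro j _
        apply dyadic
        have := frac_le_one X (G j) (y j)
        linarith
    _ = n * (1 / 2 : ℝ) ^ M + ∑ i ∈ Finset.range M, (1 / 2 : ℝ) ^ i * ∑ j, (if (1 / 2 : ℝ) ^ (i + 1) ≤
      frac X (G j) (y j) - 1 / (Fintype.card F : ℝ) then (1:ℝ) else 0) := by
        rw [Finset.sum_add_distrib, Finset.sum_comm]
        simp only [Finset.sum_const, Finset.card_univ, nsmul_eq_mul, Fintype.card_fin,
          Finset.mul_sum]
    _ ≤ n * (1 / 2 : ℝ) ^ M + ∑ i ∈ Finset.range M, 160 * (n:ℝ) / L * 2 ^ i :=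
        add_le_add le_rfl (Finset.sum_le_sum hlev)
    _ ≤ _ := by
        rw [← Finset.mul_sum, geom_sum_eq (by norm_num)]
        have : 160 * (n:ℝ) / L * ((2 ^ M - 1) / (2 - 1)) ≤ 160 * (n:ℝ) / L * 2 ^ M := by
          gcongr
          norm_num
        have e : (n:ℝ) * ((1 / 2) ^ M + 160 * 2 ^ M / L) = n * (1 / 2) ^ M + 160 * n / L * 2 ^ M := by ring
        linarith

/-- All level conditions hold for the columns `G`. -/
def GoodCols {k n : ℕ} (L M : ℕ) (s : ℕ → ℕ) (G : Fin n → Fin k → F) : Prop :=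
  ∀ i ∈ Finset.range M, ∀ S : Fin (s i) → Fin k → F,
      ((heavy S (3 * (1 / 2 : ℝ) ^ (i + 1) / 4)).card : ℝ)
        ≤ 5 / (L * ((1 / 2 : ℝ) ^ (i + 1)) ^ 2) * Fintype.card (Fin k → F) →
      ((univ.filter fun j => G j ∈ heavy S (3 * (1 / 2 : ℝ) ^ (i + 1) / 4)).card : ℝ)
        < 20 / (L * ((1 / 2 : ℝ) ^ (i + 1)) ^ 2) * n

theorem good_count {k n L M : ℕ} (hL : 0 < L) (s : ℕ → ℕ) (γ : ℝ)
    (hk : ∀ i, k * Real.log (Fintype.card F) * s i ≤ 5 * n / (L * ((1 / 2 : ℝ) ^ (i + 1)) ^ 2))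
    (hγ : M * Real.exp (-(5 * n / L)) ≤ γ) :
    (1 - γ) * (Fintype.card (Fin n → Fin k → F) : ℝ) ≤
      ((univ.filter fun G : Fin n → Fin k → F => GoodCols L M s G).card : ℝ) := by
  have hLpos : (0:ℝ) < L := by exact_mod_cast hL
  have hqpos : (0:ℝ) < Fintype.card F := by exact_mod_cast Fintype.card_pos
  set W : ℝ := (Fintype.card (Fin n → Fin k → F) : ℝ) with hW
  have hW0 : 0 ≤ W := by positivity
  have hWN : W = (Fintype.card (Fin k → F) : ℝ) ^ n := by rw [hW]; simp
  have hbad : ((univ.filter fun G : Fin n → Fin k → F => ¬ GoodCols L M s G).card : ℝ) ≤ γ * W := by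
    have hsub : (univ.filter fun G : Fin n → Fin k → F => ¬ GoodCols L M s G) ⊆
        (Finset.range M).biUnion fun i => univ.filter fun G : Fin n → Fin k → F =>
          ∃ S : Fin (s i) → Fin k → F,
          ((heavy S (3 * (1 / 2 : ℝ) ^ (i + 1) / 4)).card : ℝ)
            ≤ 5 / (L * ((1 / 2 : ℝ) ^ (i + 1)) ^ 2) * Fintype.card (Fin k → F) ∧
          20 / (L * ((1 / 2 : ℝ) ^ (i + 1)) ^ 2) * n ≤
          ((univ.filter fun j => G j ∈ heavy S (3 * (1 / 2 : ℝ) ^ (i + 1) / 4)).card : ℝ) := by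
      intro G hG
      replace hG := (Finset.mem_filter.mp hG).2
      unfold GoodCols at hG
      push Not at hG
      obtain ⟨i, hi, S, h1, h2⟩ := hG
      simp only [Finset.mem_filter, Finset.mem_univ, true_and, Finset.mem_biUnion]
      exact ⟨i, hi, S, h1, h2⟩
    have h1 : ((univ.filter fun G : Fin n → Fin k → F => ¬ GoodCols L M s G).card : ℝ) ≤
        ∑ i ∈ Finset.range M, ((univ.filter fun G : Fin n → Fin k → F =>
          ∃ S : Fin (s i) → Fin k → F,
          ((heavy S (3 * (1 / 2 : ℝ) ^ (i + 1) / 4)).card : ℝ)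
            ≤ 5 / (L * ((1 / 2 : ℝ) ^ (i + 1)) ^ 2) * Fintype.card (Fin k → F) ∧
          20 / (L * ((1 / 2 : ℝ) ^ (i + 1)) ^ 2) * n ≤
          ((univ.filter fun j => G j ∈ heavy S (3 * (1 / 2 : ℝ) ^ (i + 1) / 4)).card : ℝ)).card : ℝ) := by
      exact_mod_cast (Finset.card_le_card hsub).trans Finset.card_biUnion_le
    refine h1.trans ?_
    refine (Finset.sum_le_sum (g := fun _ => Real.exp (-(5 * n / L)) * W) fun i _ => ?_).trans ?_
    · refine (bad_count_s1 _ _ _).trans ?_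
      rw [← hWN, ← mul_assoc]
      apply mul_le_mul_of_nonneg_right _ hW0
      have e1 : (Fintype.card (Fin k → F) : ℝ) ^ (s i)
          = Real.exp (k * Real.log (Fintype.card F) * s i) := by
        rw [mul_comm _ (s i : ℝ), Real.exp_nat_mul, Real.exp_nat_mul, Real.exp_log hqpos]
        simp
      rw [e1, ← Real.exp_add, Real.exp_le_exp]
      have h2 := hk i
      have h3 : 5 * (n:ℝ) / L ≤ 5 * n / (L * ((1 / 2 : ℝ) ^ (i + 1)) ^ 2) := by
        apply div_le_div_of_nonneg_left (by positivity) (by positivity)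
        have : ((1 / 2 : ℝ) ^ (i + 1)) ^ 2 ≤ 1 :=
          pow_le_one₀ (by positivity) (pow_le_one₀ (by norm_num) (by norm_num))
        nlinarith
      have e2 : 2 * (5 / (L * ((1 / 2 : ℝ) ^ (i + 1)) ^ 2)) * n - 20 / (L * ((1 / 2 : ℝ) ^ (i + 1)) ^ 2) * n
        = -2 * (5 * n / (L * ((1 / 2 : ℝ) ^ (i + 1)) ^ 2)) := by ring
      rw [e2]
      linarith
    · rw [Finset.sum_const, nsmul_eq_mul, Finset.card_range, ← mul_assoc]
      gcongr
  have hsum := Finset.card_filter_add_card_filter_not (s := (univ : Finset (Fin n → Fin k → F)))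
    (fun G => GoodCols L M s G)
  have hsum' : ((univ.filter fun G : Fin n → Fin k → F => GoodCols L M s G).card : ℝ) +
      ((univ.filter fun G : Fin n → Fin k → F => ¬ GoodCols L M s G).card : ℝ) = W := by
    rw [hW]; exact_mod_cast hsum
  linarith

theorem good_listDecodable {k n L M : ℕ} (hn : 0 < n) (hL : 0 < L) (s : ℕ → ℕ) (hs : ∀ i, 0 < s i)
    (hη : ∀ i, Fintype.card F * (2 * Real.exp (-(s i * ((1 / 2 : ℝ) ^ (i + 1) / 4) ^ 2 / 4)))
      ≤ 1 / (8 * L))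
    (ε B : ℝ) (hε : 0 < ε) (hM : (1 / 2 : ℝ) ^ M + 160 * 2 ^ M / L ≤ ε / 2) (hB : L ≤ B)
    (G : Matrix (Fin k) (Fin n) F) (hG : GoodCols L M s (fun j i => G i j)) :
    listDecodable (Set.range fun x : Fin k → F => Matrix.vecMul x G)
      ((1 - 1 / (Fintype.card F : ℝ)) * (1 - ε)) B := by
  intro y
  by_contra hcon
  push Not at hcon
  have hnpos : (0:ℝ) < n := by exact_mod_cast hn
  have hLpos : (0:ℝ) < L := by exact_mod_cast hL
  set ρ := (1 - 1 / (Fintype.card F : ℝ)) * (1 - ε) with hρ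
  set A := {c | c ∈ (Set.range fun x : Fin k → F => Matrix.vecMul x G) ∧ relDist c y < ρ} with hA
  have hLA : L ≤ A.ncard := by exact_mod_cast (hB.trans hcon.le)
  have hcard : Fintype.card (Fin L) ≤ Fintype.card A := by
    rw [Fintype.card_fin, ← Nat.card_eq_fintype_card, Nat.card_coe_set_eq]; exact hLA
  obtain ⟨f⟩ := Function.Embedding.nonempty_of_card_le hcard
  have hf : ∀ l, ∃ x : Fin k → F, Matrix.vecMul x G = (f l).1 := fun l => (f l).2.1
  choose X hXf using hf
  have hXinj : Function.Injective X := by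
    intro a b hab
    apply f.injective
    apply Subtype.ext
    rw [← hXf a, ← hXf b, hab]
  have hab := agree_bound X hXinj hL s hs hη (fun j i => G i j) hG y
  have hdist : ∀ l, n * (1 - ρ) < ∑ j, if X l ⬝ᵥ (fun i => G i j) = y j then (1:ℝ) else 0 := by
    intro l
    have h1 := (f l).2.2
    unfold relDist at h1
    rw [div_lt_iff₀ hnpos, ← hXf l] at h1
    have h2 : ({j : Fin n | Matrix.vecMul (X l) G j ≠ y j}.ncard : ℝ)
        = ∑ j, if X l ⬝ᵥ (fun i => G i j) = y j then (0:ℝ) else 1 := by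
      rw [Set.ncard_eq_toFinset_card']
      rw [Finset.sum_ite]
      simp only [Finset.sum_const_zero, zero_add, Finset.sum_const, nsmul_eq_mul, mul_one]
      congr 2
      ext j
      rw [Set.mem_toFinset, Finset.mem_filter]
      exact ⟨fun h => ⟨Finset.mem_univ _, h⟩, fun h => h.2⟩
    have h3 : (∑ j, if X l ⬝ᵥ (fun i => G i j) = y j then (0:ℝ) else 1) +
        (∑ j, if X l ⬝ᵥ (fun i => G i j) = y j then (1:ℝ) else 0) = n := by
      rw [← Finset.sum_add_distrib]
      rw [Finset.sum_congr rfl (g := fun _ => (1:ℝ)) (fun j _ => by split_ifs <;> norm_num)]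
      simp
    rw [h2] at h1
    linarith
  have hsum : L * (n * (1 - ρ)) < L * ∑ j, frac X (fun i => G i j) (y j) := by
    have e : L * ∑ j, frac X (fun i => G i j) (y j)
        = ∑ l, ∑ j, if X l ⬝ᵥ (fun i => G i j) = y j then (1:ℝ) else 0 := by
      rw [Finset.sum_comm, Finset.mul_sum]
      apply Finset.sum_congr rfl; intro j _
      simp only [frac]; field_simp
    rw [e]
    haveI : Nonempty (Fin L) := ⟨⟨0, hL⟩⟩
    have := Finset.sum_lt_sum_of_nonempty (s := (univ : Finset (Fin L))) Finset.univ_nonempty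
      (fun l _ => hdist l)
    simpa using this
  have hsum2 := lt_of_mul_lt_mul_left hsum hLpos.le
  rw [Finset.sum_sub_distrib] at hab
  simp only [Finset.sum_const, Finset.card_univ, nsmul_eq_mul, Fintype.card_fin] at hab
  have hq2 : (2:ℝ) ≤ Fintype.card F := by exact_mod_cast Fintype.one_lt_card
  have hq3 : 1 / (Fintype.card F : ℝ) ≤ 1 / 2 := one_div_le_one_div_of_le (by norm_num) hq2
  have h5 : (n:ℝ) * ((1 / 2) ^ M + 160 * 2 ^ M / L) ≤ n * (ε / 2) := by gcongr
  have h6 : n * (1 - ρ) = n * (1 / (Fintype.card F : ℝ)) + n * (ε * (1 - 1 / (Fintype.card F : ℝ))) := by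
    rw [hρ]; ring
  have h7 : (n:ℝ) * (ε / 2) ≤ n * (ε * (1 - 1 / (Fintype.card F : ℝ))) := by
    gcongr; nlinarith
  linarith

end aux

theorem stmt1 :
    ∃ c C : ℝ, 0 < c ∧ 0 < C ∧
      ∀ (F : Type) [Field F] [Fintype F],
        ∀ ε γ : ℝ, 0 < ε → ε < 1 / 2 → 0 < γ → γ < 1 / 2 →
          ∃ n₀ : ℕ, ∀ n : ℕ, n₀ ≤ n →
            ∃ kt : ℕ,
              (kt : ℝ) / (n : ℝ) ≥
                c * ε ^ 2 /
                  (Real.log (1 / γ) * (Real.log ((Fintype.card F : ℝ) / ε)) ^ 3 *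
                    Real.log (Fintype.card F : ℝ)) ∧
              ({G : Matrix (Fin kt) (Fin n) F |
                  listDecodable (Set.range fun x : Fin kt → F => Matrix.vecMul x G)
                    ((1 - 1 / (Fintype.card F : ℝ)) * (1 - ε)) (C / ε ^ 2)}.ncard : ℝ) ≥
                (1 - γ) * (Fintype.card (Matrix (Fin kt) (Fin n) F) : ℝ) := by
  classical
  refine ⟨1 / 10 ^ 7, 5121, by norm_num, by norm_num, ?_⟩
  intro F _ _ ε γ hε hε2 hγ hγ2
  set q : ℝ := (Fintype.card F : ℝ) with hq
  have hq2 : (2:ℝ) ≤ q := by rw [hq]; exact_mod_cast Fintype.one_lt_card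
  have hqpos : 0 < q := by linarith
  -- the parameters
  obtain ⟨M', hM1, hM2⟩ := exists_nat_pow_near (x := 4 / ε) (y := (2:ℝ))
    (by rw [le_div_iff₀ hε]; linarith) (by norm_num)
  obtain ⟨L, hLdef⟩ : ∃ L : ℕ, L = ⌈5120 / ε ^ 2⌉₊ := ⟨_, rfl⟩
  have hLlow : 5120 / ε ^ 2 ≤ L := by rw [hLdef]; exact Nat.le_ceil _
  have hε1 : 1 ≤ 1 / ε ^ 2 := by rw [le_div_iff₀ (by positivity)]; nlinarith
  have hLup : (L:ℝ) ≤ 5121 / ε ^ 2 := by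
    have h1 := (Nat.ceil_lt_add_one (a := 5120 / ε ^ 2) (by positivity)).le
    rw [← hLdef] at h1
    have : 5121 / ε ^ 2 = 5120 / ε ^ 2 + 1 / ε ^ 2 := by ring
    linarith
  have hLpos : (0:ℝ) < L := lt_of_lt_of_le (by positivity) hLlow
  have hL : 0 < L := by exact_mod_cast hLpos
  have hL1 : (1:ℝ) ≤ L := by exact_mod_cast hL
  have hMle : (1 / 2 : ℝ) ^ (M' + 1) + 160 * 2 ^ (M' + 1) / L ≤ ε / 2 := by
    have h1 : (1 / 2 : ℝ) ^ (M' + 1) ≤ ε / 4 := by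
      rw [one_div, inv_pow]
      have := inv_anti₀ (by positivity) hM2.le
      rwa [inv_div] at this
    have h2 : 160 * (2:ℝ) ^ (M' + 1) / L ≤ ε / 4 := by
      rw [div_le_iff₀ hLpos]
      have h3 : (2:ℝ) ^ (M' + 1) ≤ 8 / ε := by
        rw [pow_succ]
        have : 8 / ε = 4 / ε * 2 := by ring
        linarith
      have h4 : ε / 4 * (5120 / ε ^ 2) ≤ ε / 4 * L := by gcongr
      have h5 : ε / 4 * (5120 / ε ^ 2) = 160 * (8 / ε) := by field_simp; norm_num
      linarith
    linarith
  obtain ⟨ℓ, hℓ⟩ : ∃ ℓ : ℝ, ℓ = Real.log (16 * q * L) := ⟨_, rfl⟩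
  have hlog4 : 1 ≤ Real.log 4 := by
    have : (4:ℝ) = 2 ^ 2 := by norm_num
    rw [this, Real.log_pow]
    have := Real.log_two_gt_d9
    push_cast; linarith
  have hℓ1 : 1 ≤ ℓ := by
    rw [hℓ]
    refine hlog4.trans (Real.log_le_log (by norm_num) ?_)
    nlinarith
  let s : ℕ → ℕ := fun i => ⌈64 * ℓ / ((1 / 2 : ℝ) ^ (i + 1)) ^ 2⌉₊
  have hslow : ∀ i, 64 * ℓ / ((1 / 2 : ℝ) ^ (i + 1)) ^ 2 ≤ s i := fun i => Nat.le_ceil _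
  have hs : ∀ i, 0 < s i := fun i => Nat.ceil_pos.mpr (by positivity)
  have hsup : ∀ i, (s i : ℝ) ≤ 65 * ℓ / ((1 / 2 : ℝ) ^ (i + 1)) ^ 2 := by
    intro i
    have h1 := (Nat.ceil_lt_add_one (a := 64 * ℓ / ((1 / 2 : ℝ) ^ (i + 1)) ^ 2) (by positivity)).le
    have h2 : 1 ≤ ℓ / ((1 / 2 : ℝ) ^ (i + 1)) ^ 2 := by
      rw [le_div_iff₀ (by positivity)]
      have : ((1 / 2 : ℝ) ^ (i + 1)) ^ 2 ≤ 1 :=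
          pow_le_one₀ (by positivity) (pow_le_one₀ (by norm_num) (by norm_num))
      linarith
    have h3 : 65 * ℓ / ((1 / 2 : ℝ) ^ (i + 1)) ^ 2 = 64 * ℓ / ((1 / 2 : ℝ) ^ (i + 1)) ^ 2 +
      ℓ / ((1 / 2 : ℝ) ^ (i + 1)) ^ 2 := by ring
    rw [h3]
    exact h1.trans (by linarith)
  have hη : ∀ i, (Fintype.card F : ℝ) *
      (2 * Real.exp (-(s i * ((1 / 2 : ℝ) ^ (i + 1) / 4) ^ 2 / 4))) ≤ 1 / (8 * L) := by
    intro i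
    rw [← hq]
    have h1 : ℓ ≤ s i * ((1 / 2 : ℝ) ^ (i + 1) / 4) ^ 2 / 4 := by
      have := hslow i
      rw [div_le_iff₀ (by positivity)] at this
      have e : s i * ((1 / 2 : ℝ) ^ (i + 1) / 4) ^ 2 / 4 = s i * ((1 / 2 : ℝ) ^ (i + 1)) ^ 2 / 64 := by ring
      rw [e]; linarith
    have h2 : Real.exp (-(s i * ((1 / 2 : ℝ) ^ (i + 1) / 4) ^ 2 / 4)) ≤ (16 * q * L)⁻¹ := by
      rw [← Real.exp_log (show 0 < 16 * q * L by positivity), ← Real.exp_neg, ← hℓ]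
      exact Real.exp_le_exp.mpr (by linarith)
    calc q * (2 * Real.exp (-(s i * ((1 / 2 : ℝ) ^ (i + 1) / 4) ^ 2 / 4)))
        ≤ q * (2 * (16 * q * L)⁻¹) := by gcongr
      _ = 1 / (8 * L) := by field_simp; norm_num
  -- logarithms
  obtain ⟨lγ, hlγ⟩ : ∃ x : ℝ, x = Real.log (1 / γ) := ⟨_, rfl⟩
  obtain ⟨lq, hlq⟩ : ∃ x : ℝ, x = Real.log q := ⟨_, rfl⟩
  obtain ⟨lqe, hlqe⟩ : ∃ x : ℝ, x = Real.log (q / ε) := ⟨_, rfl⟩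
  rw [← hlγ, ← hlq, ← hlqe]
  have hlog2 := Real.log_two_gt_d9
  have h1γ : 1 / 2 ≤ lγ := by
    rw [hlγ]
    have : Real.log 2 ≤ Real.log (1 / γ) := Real.log_le_log (by norm_num) (by
      rw [le_div_iff₀ hγ]; linarith)
    linarith
  have h1q : 0 < lq := by
    rw [hlq]; exact Real.log_pos (by linarith)
  have hqe4 : 4 ≤ q / ε := by rw [le_div_iff₀ hε]; linarith
  have h1qe : 1 ≤ lqe := by
    rw [hlqe]; exact hlog4.trans (Real.log_le_log (by norm_num) hqe4)
  have hℓqe : ℓ ≤ 11 * lqe := by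
    rw [hℓ, hlqe]
    have : (11:ℝ) * Real.log (q / ε) = Real.log ((q / ε) ^ 11) := by rw [Real.log_pow]; norm_num
    rw [this]
    apply Real.log_le_log (by positivity)
    have h9 : (4:ℝ) ^ 9 ≤ (q / ε) ^ 9 := by gcongr
    have h10 : q / ε ^ 2 ≤ (q / ε) ^ 2 := by
      rw [div_pow]; gcongr; nlinarith
    calc 16 * q * L ≤ 16 * q * (5121 / ε ^ 2) := by gcongr
      _ = 81936 * (q / ε ^ 2) := by ring
      _ ≤ 4 ^ 9 * (q / ε ^ 2) := by gcongr; norm_num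
      _ ≤ (q / ε) ^ 9 * (q / ε) ^ 2 := by gcongr
      _ = (q / ε) ^ 11 := by ring
  obtain ⟨x, hx⟩ : ∃ x : ℝ, x = 1 / 10 ^ 7 * ε ^ 2 / (lγ * lqe ^ 3 * lq) := ⟨_, rfl⟩
  have hxpos : 0 < x := by rw [hx]; positivity
  rw [← hx]
  refine ⟨⌈1 / x⌉₊ + ⌈L * Real.log ((M' + 1) / γ)⌉₊ + 1, ?_⟩
  intro n hn
  have hn0 : 0 < n := by omega
  have hnpos : (0:ℝ) < n := by exact_mod_cast hn0
  have hn1 : 1 / x ≤ n := (Nat.le_ceil _).trans (Nat.cast_le.mpr (by omega))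
  have hn2 : L * Real.log ((M' + 1) / γ) ≤ n := (Nat.le_ceil _).trans (Nat.cast_le.mpr (by omega))
  have hxn : 1 ≤ x * n := by rw [div_le_iff₀ hxpos] at hn1; linarith
  refine ⟨⌈x * n⌉₊, ?_, ?_⟩
  · rw [ge_iff_le, le_div_iff₀ hnpos]; exact Nat.le_ceil _
  generalize hk : ⌈x * n⌉₊ = k
  have hkup : (k:ℝ) ≤ 2 * (x * n) := by
    have := (Nat.ceil_lt_add_one (a := x * n) (by positivity)).le
    rw [hk] at this; linarith
  have hkey : 13 * (k * lq * ℓ * L) ≤ n := by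
    calc 13 * (k * lq * ℓ * L) ≤ 13 * ((2 * (x * n)) * lq * (11 * lqe) * (5121 / ε ^ 2)) := by
          gcongr
      _ = (1464606 / 10 ^ 7 / (lγ * lqe ^ 2)) * n := by
          rw [hx]; field_simp; norm_num
      _ ≤ 1 * n := by
          gcongr
          rw [div_le_one (by positivity)]
          have : 1 ≤ lqe ^ 2 := one_le_pow₀ h1qe
          nlinarith
      _ = n := one_mul _
  have hgc := good_count (F := F) (k := k) (n := n) (M := M' + 1) hL s γ (by
    intro i
    rw [← hq, ← hlq]
    have h1 : (k:ℝ) * lq * s i ≤ k * lq * (65 * ℓ / ((1 / 2 : ℝ) ^ (i + 1)) ^ 2) := by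
      gcongr; exact hsup i
    refine h1.trans ?_
    have e : (k:ℝ) * lq * (65 * ℓ / ((1 / 2 : ℝ) ^ (i + 1)) ^ 2)
      = 5 * (13 * (k * lq * ℓ * L)) / (L * ((1 / 2 : ℝ) ^ (i + 1)) ^ 2) := by
      field_simp; ring
    rw [e]
    gcongr) (by
    push_cast
    have hMγ : (0:ℝ) < (M' + 1) / γ := by positivity
    have h1 : Real.log ((M' + 1) / γ) ≤ 5 * n / L := by
      rw [le_div_iff₀ hLpos]; linarith
    have h2 : Real.exp (-(5 * n / L)) ≤ ((M' + 1) / γ)⁻¹ := by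
      rw [← Real.exp_log hMγ, ← Real.exp_neg]
      exact Real.exp_le_exp.mpr (by linarith)
    calc ((M':ℝ) + 1) * Real.exp (-(5 * n / L)) ≤ (M' + 1) * ((M' + 1) / γ)⁻¹ := by gcongr
      _ = γ := by field_simp)
  have hcardEq : (Fintype.card (Matrix (Fin k) (Fin n) F) : ℝ) = Fintype.card (Fin n → Fin k → F) := by
    congr 1
    exact Fintype.card_congr (Equiv.piComm (fun (_ : Fin k) (_ : Fin n) => F))
  rw [hcardEq, ge_iff_le]
  refine hgc.trans ?_
  norm_cast
  rw [← Set.ncard_coe_finset]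
  refine Set.ncard_le_ncard_of_injOn (fun G => fun i j => G j i) ?_ ?_ (Set.toFinite _)
  · intro G hG
    replace hG := (Finset.mem_filter.mp (Finset.mem_coe.mp hG)).2
    exact good_listDecodable hn0 hL s hs hη ε (5121 / ε ^ 2) hε hMle hLup (fun i j => G j i) hG
  · intro G _ G' _ h
    funext j i
    exact congrFun (congrFun h i) j
end

section
/- Let q ≥ 2 and L ≥ 2 be integers, let C ⊆ [q]^n be a code, and let δ ∈ [0,1] satisfy δ(1 − 1/L) ≤ 1 − 1/q. If every subset of L distinct codewords of C has average pairwise relative Hamming distance at least δ, then C is (J_q(δ − δ/L), L−1)-list decodable. -/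
open scoped BigOperators

/-- Average pairwise relative Hamming distance of an L-tuple of codewords. -/
noncomputable def avgPairDist {n L : ℕ} {A : Type*} (c : Fin L → (Fin n → A)) : ℝ :=
  (∑ i : Fin L, ∑ j : Fin L, if i < j then relDist (c i) (c j) else 0) / (L.choose 2 : ℝ)

/-- The Johnson radius function J_q(x) = ((q−1)/q)(1 − √(1 − qx/(q−1))). -/
noncomputable def Jq (q : ℕ) (x : ℝ) : ℝ :=
  ((q : ℝ) - 1) / q * (1 - Real.sqrt (1 - q * x / ((q : ℝ) - 1)))

lemma aux_coord (q L : ℕ) (hq : 2 ≤ q) (f : Fin L → Fin q) (a : Fin q) :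
    (∑ i, ∑ j, (if f i ≠ f j then (1:ℝ) else 0)) ≤
      2 * L * (∑ i, if f i ≠ a then (1:ℝ) else 0)
        - (q / ((q:ℝ) - 1)) * (∑ i, if f i ≠ a then (1:ℝ) else 0) ^ 2 := by
  set e : ℝ := ∑ i, if f i ≠ a then (1:ℝ) else 0 with he
  let m : Fin q → ℝ := fun b => ∑ i, if f i = b then (1:ℝ) else 0
  have hq1 : (0:ℝ) < (q:ℝ) - 1 := by
    have : (2:ℝ) ≤ q := by exact_mod_cast hq
    linarith
  have h1 : ∑ b, m b = L := by
    simp only [m]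
    rw [Finset.sum_comm]
    simp
  have h2 : m a = L - e := by
    have : m a + e = L := by
      simp only [m, he]
      rw [← Finset.sum_add_distrib]
      have : ∀ i, ((if f i = a then (1:ℝ) else 0) + if f i ≠ a then (1:ℝ) else 0) = 1 := by
        intro i; by_cases h : f i = a <;> simp [h]
      rw [Finset.sum_congr rfl fun i _ => this i]
      simp
    linarith
  have h3 : (∑ i, ∑ j, (if f i ≠ f j then (1:ℝ) else 0)) = L ^ 2 - ∑ b, m b ^ 2 := by
    have hs : ∑ b, m b ^ 2 = ∑ i, ∑ j, (if f i = f j then (1:ℝ) else 0) := by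
      simp only [m, sq, Finset.sum_mul_sum]
      rw [Finset.sum_comm]
      refine Finset.sum_congr rfl fun i _ => ?_
      rw [Finset.sum_comm]
      refine Finset.sum_congr rfl fun j _ => ?_
      simp [eq_comm]
    rw [hs, eq_sub_iff_add_eq, ← Finset.sum_add_distrib]
    have : ∀ i j, ((if f i ≠ f j then (1:ℝ) else 0) + if f i = f j then (1:ℝ) else 0) = 1 := by
      intro i j; by_cases h : f i = f j <;> simp [h]
    have h' : ∀ i, ((∑ j, if f i ≠ f j then (1:ℝ) else 0) + ∑ j, if f i = f j then (1:ℝ) else 0)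
        = L := by
      intro i
      rw [← Finset.sum_add_distrib, Finset.sum_congr rfl fun j _ => this i j]
      simp
    rw [Finset.sum_congr rfl fun i _ => h' i]
    simp [sq]
  have h4 : ∑ b, m b ^ 2 = m a ^ 2 + ∑ b ∈ Finset.univ.erase a, m b ^ 2 :=
    (Finset.add_sum_erase _ _ (Finset.mem_univ a)).symm
  have h5 : ∑ b, m b = m a + ∑ b ∈ Finset.univ.erase a, m b :=
    (Finset.add_sum_erase _ _ (Finset.mem_univ a)).symm
  have h6 := sq_sum_le_card_mul_sum_sq (s := Finset.univ.erase a) (f := m)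
  have h7 : ∑ b ∈ Finset.univ.erase a, m b = e := by linarith
  have h8 : (((Finset.univ.erase a).card : ℕ) : ℝ) = (q:ℝ) - 1 := by
    rw [Finset.card_erase_of_mem (Finset.mem_univ a), Finset.card_univ, Fintype.card_fin,
      Nat.cast_sub (by omega)]
    simp
  rw [h7, h8] at h6
  rw [h3, h4, h2]
  have h9 : e ^ 2 / ((q:ℝ) - 1) ≤ ∑ b ∈ Finset.univ.erase a, m b ^ 2 := by
    rw [div_le_iff₀ hq1]; linarith
  have h10 : (q / ((q:ℝ) - 1)) * e ^ 2 = e ^ 2 + e ^ 2 / ((q:ℝ) - 1) := by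
    field_simp
    ring
  rw [h10]
  nlinarith

lemma relDist_eq {n q : ℕ} (x y : Fin n → Fin q) :
    relDist x y = (∑ k, if x k ≠ y k then (1:ℝ) else 0) / n := by
  unfold relDist
  congr 1
  rw [Set.ncard_eq_toFinset_card', Finset.sum_boole]
  congr 2
  ext k
  simp

lemma relDist_symm {n q : ℕ} (x y : Fin n → Fin q) : relDist x y = relDist y x := by
  simp only [relDist_eq, ne_comm]

lemma aux_pairs {n q L : ℕ} (hL : 2 ≤ L) (c : Fin L → (Fin n → Fin q)) :
    ∑ i, ∑ j, relDist (c i) (c j) = L * ((L:ℝ) - 1) * avgPairDist c := by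
  have hL' : (2:ℝ) ≤ L := by exact_mod_cast hL
  have h : ∑ i, ∑ j, relDist (c i) (c j) =
      2 * ∑ i : Fin L, ∑ j : Fin L, if i < j then relDist (c i) (c j) else 0 := by
    rw [two_mul]
    nth_rewrite 3 [Finset.sum_comm]
    rw [← Finset.sum_add_distrib]
    refine Finset.sum_congr rfl fun i _ => ?_
    rw [← Finset.sum_add_distrib]
    refine Finset.sum_congr rfl fun j _ => ?_
    rcases lt_trichotomy i j with h | h | h
    · simp [h, h.not_gt]
    · subst h; simp [relDist_eq]
    · simp [h, h.not_gt, relDist_symm (c i)]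
  rw [h, avgPairDist, Nat.cast_choose_two]
  have h1 : (L:ℝ) ≠ 0 := by linarith
  have h2 : (L:ℝ) - 1 ≠ 0 := by linarith
  field_simp

/-- Average-distance Johnson bound.  If every L distinct codewords of a
q-ary code C have average pairwise relative distance at least δ, where
δ(1 − 1/L) ≤ 1 − 1/q, then C is (J_q(δ − δ/L), L − 1)-list decodable. -/
theorem stmt2 (q L n : ℕ) (hq : 2 ≤ q) (hL : 2 ≤ L)
    (C : Set (Fin n → Fin q)) (δ : ℝ) (hδ0 : 0 ≤ δ) (hδ1 : δ ≤ 1)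
    (hdom : δ * (1 - 1 / (L : ℝ)) ≤ 1 - 1 / (q : ℝ))
    (havg : ∀ c : Fin L → (Fin n → Fin q),
      Function.Injective c → (∀ i, c i ∈ C) → δ ≤ avgPairDist c) :
    listDecodable C (Jq q (δ - δ / (L : ℝ))) ((L : ℝ) - 1) := by
  intro y
  by_contra hcon
  set S : Set (Fin n → Fin q) := {c | c ∈ C ∧ relDist c y < Jq q (δ - δ / (L : ℝ))} with hS
  have hcard : L ≤ S.ncard := by
    by_contra h
    apply hcon
    have : S.ncard + 1 ≤ L := by omega
    have : ((S.ncard:ℝ) + 1) ≤ L := by exact_mod_cast this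
    linarith
  have hL' : (2:ℝ) ≤ L := by exact_mod_cast hL
  have hq' : (2:ℝ) ≤ q := by exact_mod_cast hq
  obtain ⟨c, hinj, hc⟩ : ∃ c : Fin L → (Fin n → Fin q), Function.Injective c ∧ ∀ i, c i ∈ S := by
    classical
    have h : Fintype.card (Fin L) ≤ Fintype.card S := by
      rw [Fintype.card_fin, ← Nat.card_eq_fintype_card]; exact hcard
    obtain ⟨g⟩ := Function.Embedding.nonempty_of_card_le h
    exact ⟨fun i => (g i : Fin n → Fin q), Subtype.val_injective.comp g.injective,
      fun i => (g i).2⟩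
  have hδ := havg c hinj (fun i => (hc i).1)
  have hn : (0:ℝ) < n := by
    rcases Nat.eq_zero_or_pos n with h | h
    · subst h
      have : (⟨0, by omega⟩ : Fin L) = ⟨1, by omega⟩ := hinj (Subsingleton.elim _ _)
      simp at this
    · exact_mod_cast h
  set e : Fin n → ℝ := fun k => ∑ i, if c i k ≠ y k then (1:ℝ) else 0 with he
  set E : ℝ := ∑ k, e k with hE
  have hE1 : ∑ i, relDist (c i) y = E / n := by
    simp only [relDist_eq, ← Finset.sum_div, hE, he]
    rw [Finset.sum_comm]
  have hP : ∑ i, ∑ j, relDist (c i) (c j) ≤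
      (2 * L * E - (q / ((q:ℝ) - 1)) * ∑ k, e k ^ 2) / n := by
    simp only [relDist_eq, ← Finset.sum_div]
    gcongr
    calc _ = ∑ k, ∑ i, ∑ j, (if c i k ≠ c j k then (1:ℝ) else 0) := by
          rw [Finset.sum_comm]
          rw [Finset.sum_congr rfl fun j _ => Finset.sum_comm]
          rw [Finset.sum_comm]
          refine Finset.sum_congr rfl fun k _ => ?_
          rw [Finset.sum_comm]
      _ ≤ ∑ k, (2 * L * e k - (q / ((q:ℝ) - 1)) * e k ^ 2) :=
          Finset.sum_le_sum fun k _ => aux_coord q L hq (fun i => c i k) (y k)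
      _ = _ := by rw [Finset.sum_sub_distrib, ← Finset.mul_sum, ← Finset.mul_sum]
  have hJ : E ^ 2 ≤ n * ∑ k, e k ^ 2 := by
    have := sq_sum_le_card_mul_sum_sq (s := Finset.univ) (f := e)
    simpa using this
  obtain ⟨r, hr⟩ : ∃ r : ℝ, r = E / n / L := ⟨_, rfl⟩
  have hEr : E = r * n * L := by rw [hr]; field_simp
  have hrJ : r < Jq q (δ - δ / (L : ℝ)) := by
    rw [hr, ← hE1, div_lt_iff₀ (by linarith)]
    have : ∑ i, relDist (c i) y < ∑ i : Fin L, Jq q (δ - δ / (L : ℝ)) := by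
      apply Finset.sum_lt_sum_of_nonempty
      · exact ⟨⟨0, by omega⟩, Finset.mem_univ _⟩
      · exact fun i _ => (hc i).2
    simpa [mul_comm] using this
  obtain ⟨t, ht⟩ : ∃ t : ℝ, t = q / ((q:ℝ) - 1) := ⟨_, rfl⟩
  have ht0 : 0 < t := by rw [ht]; apply div_pos <;> linarith
  have hS2 : r ^ 2 * n * L ^ 2 ≤ ∑ k, e k ^ 2 := by
    rw [hEr] at hJ
    apply le_of_mul_le_mul_left _ hn
    linarith
  rw [aux_pairs hL, ← ht, le_div_iff₀ hn, hEr] at hP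
  have hx : δ - δ / L ≤ 2 * r - t * r ^ 2 := by
    have a1 := mul_le_mul_of_nonneg_left hS2 ht0.le
    have a2 : L * ((L:ℝ) - 1) * δ ≤ L * ((L:ℝ) - 1) * avgPairDist c :=
      mul_le_mul_of_nonneg_left hδ (by nlinarith)
    have a3 := mul_le_mul_of_nonneg_right a2 hn.le
    have a4 : (δ - δ / L) = L * ((L:ℝ) - 1) * δ / L ^ 2 := by field_simp
    rw [a4, div_le_iff₀ (by positivity)]
    apply le_of_mul_le_mul_right _ hn
    linarith
  have hsq : (1 - t * r) ^ 2 ≤ 1 - t * (δ - δ / L) := by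
    have := mul_le_mul_of_nonneg_left hx ht0.le
    nlinarith
  have hab := Real.le_sqrt_of_sq_le hsq
  have hJq : Jq q (δ - δ / L) = t⁻¹ * (1 - Real.sqrt (1 - t * (δ - δ / L))) := by
    rw [Jq, ht, inv_div, div_mul_eq_mul_div (q:ℝ)]
  rw [hJq, lt_inv_mul_iff₀ ht0] at hrJ
  linarith
end

section
/- Let K > 0 and A be real numbers with 0 < A ≤ 2K. Then ∫₀^A √(ln(1 + 2K/u)) du ≤ A·√(ln(4K/A)) + A/(2·√(ln(4K/A))). -/
open MeasureTheory

/-- For 0 < A ≤ 2K, the Lebesgue integral of u ↦ √(ln(1 + 2K/u)) over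
(0, A] is at most A·√(ln(4K/A)) + A/(2·√(ln(4K/A))). -/
theorem stmt17 (K A : ℝ) (hK : 0 < K) (hA : 0 < A) (hA2 : A ≤ 2 * K) :
    (∫ u in Set.Ioc (0 : ℝ) A, Real.sqrt (Real.log (1 + 2 * K / u))) ≤
      A * Real.sqrt (Real.log (4 * K / A)) +
        A / (2 * Real.sqrt (Real.log (4 * K / A))) := by
  have hL : 0 < Real.log (4 * K / A) := by
    apply Real.log_pos
    rw [lt_div_iff₀ hA]
    linarith
  have hs : 0 < Real.sqrt (Real.log (4 * K / A)) := Real.sqrt_pos.2 hL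
  have hsq := Real.sq_sqrt hL.le
  set s := Real.sqrt (Real.log (4 * K / A)) with hsdef
  have hi : IntervalIntegrable (fun u : ℝ => s + (Real.log A - Real.log u) / (2 * s))
      volume 0 A :=
    intervalIntegrable_const.add
      ((intervalIntegrable_const.sub intervalIntegral.intervalIntegrable_log').div_const _)
  have hval : (∫ u in Set.Ioc (0 : ℝ) A, (s + (Real.log A - Real.log u) / (2 * s)))
      = A * s + A / (2 * s) := by
    rw [← intervalIntegral.integral_of_le hA.le,
      intervalIntegral.integral_add intervalIntegrable_const
      ((intervalIntegrable_const.sub intervalIntegral.intervalIntegrable_log').div_const _),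
      intervalIntegral.integral_div,
      intervalIntegral.integral_sub intervalIntegrable_const
        intervalIntegral.intervalIntegrable_log', integral_log]
    simp
  rw [← hval]
  apply integral_mono_of_nonneg
  · exact Filter.Eventually.of_forall fun u => Real.sqrt_nonneg _
  · exact (intervalIntegrable_iff_integrableOn_Ioc_of_le hA.le).1 hi
  · refine (ae_restrict_iff' measurableSet_Ioc).2 (Filter.Eventually.of_forall ?_)
    rintro u ⟨hu, huA⟩
    show Real.sqrt (Real.log (1 + 2 * K / u)) ≤ s + (Real.log A - Real.log u) / (2 * s)
    have h1 : Real.log (1 + 2 * K / u) ≤ Real.log (4 * K / u) := by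
      apply Real.log_le_log (by positivity)
      rw [le_div_iff₀ hu, add_mul, div_mul_cancel₀ _ hu.ne']
      linarith
    rw [Real.log_div (by positivity) hu.ne'] at h1
    rw [Real.log_div (by positivity) hA.ne'] at hsq
    have h3 : Real.log u ≤ Real.log A := Real.log_le_log hu huA
    have h4 : 0 ≤ (Real.log A - Real.log u) / (2 * s) :=
      div_nonneg (by linarith) (by positivity)
    apply Real.sqrt_le_iff.2 ⟨by linarith, ?_⟩
    have h5 : 2 * s * ((Real.log A - Real.log u) / (2 * s)) = Real.log A - Real.log u := by
      field_simp
    nlinarith [sq_nonneg ((Real.log A - Real.log u) / (2 * s))]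
end
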